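/- arXiv:1011.0975 — 2 statements merged into one kernel-verified Lean document; each statement's English description precedes it below -/
import Mathlib

section
/- Let F be a finite hyperforest (a hypergraph whose distinct hyperedges intersect in at most one vertex and with every cycle contained in a hyperedge). In the poset of hyperforests on a fixed labelled vertex set, ordered by F' ≤ F if every hyperedge of F' is contained in some hyperedge of F, the Möbius function value μ(minimal element, F) equals Π_{j≥2} (-(j-2)!)^{κ_j}, where κ_j is the number of hyperedges of F with exactly j vertices. -/
/-- A hyperforest on the vertex set `V`: a hypergraph whose hyperedges (of size at
least `2`) pairwise intersect in at most one vertex, and in which every cycle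
(a cyclic sequence of at least three distinct consecutively adjacent vertices)
is contained in a single hyperedge. -/
structure Hyperforest (V : Type*) [DecidableEq V] where
  edges : Finset (Finset V)
  two_le : ∀ e ∈ edges, 2 ≤ e.card
  inter : ∀ e ∈ edges, ∀ f ∈ edges, e ≠ f → (e ∩ f).card ≤ 1
  cycles : ∀ (k : ℕ) (v : Fin (k + 3) → V), Function.Injective v →
    (∀ j : Fin (k + 3), ∃ e ∈ edges, v j ∈ e ∧ v (j + 1) ∈ e) →
    ∃ e ∈ edges, ∀ j, v j ∈ e

/-- The order on hyperforests: `F' ≤ F` iff every hyperedge of `F'` is contained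
in some hyperedge of `F`. -/
def HFle {V : Type*} [DecidableEq V] (F' F : Hyperforest V) : Prop :=
  ∀ e' ∈ F'.edges, ∃ e ∈ F.edges, e' ⊆ e

open Finset

/-!
Let `w` be the product of `-(#e - 2)!` over the hyperedges `e` of a hyperforest. It has to be shown
that `w` sums to zero over the hyperforests below `F`, for every nontrivial `F`. This sum is the
product of the corresponding sums for the hyperedges of `F`, so let `F` have a single hyperedge `S`,
and choose `a ≠ b` in `S`.

If a hyperforest connects `a` and `b`, remove `a` from the first hyperedge `f` of the path from `a`
to `b`. The result is a hyperforest `H` that does not connect `a` and `b`; let `C` be the component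
of `b` in `H`. Either `#f = 2`, then `f` has become a vertex of `C` and a factor `-1` is lost, or
`f` has become a hyperedge `g` of `C` and a factor `#g - 1` is lost. Since `C` is a hypertree,
`∑ (#g - 1) = #C - 1` over its hyperedges `g`. Hence the hyperforests that connect `a` and `b`
contribute `∑ (#C - 1 - #C) w(H) = -∑ w(H)`, the sums being over all `H` that do not connect `a`
and `b`.
-/

theorem eq_of_finsum_mem_Iic_eq_zero {P M : Type*} [PartialOrder P] [OrderBot P]
    [AddCommGroup M] {μ w : P → M} (hfin : ∀ x : P, (Set.Iic x).Finite) (hbot : μ ⊥ = w ⊥)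
    (hμ : ∀ x ≠ ⊥, μ x = -∑ᶠ y ∈ Set.Iio x, μ y) (hw : ∀ x ≠ ⊥, ∑ᶠ y ∈ Set.Iic x, w y = 0) :
    μ = w := by
  have hfin' (x : P) : (Set.Iio x).Finite := (hfin x).subset Set.Iio_subset_Iic_self
  have hmono : StrictMono fun x : P => (Set.Iic x).ncard := fun x y hxy =>
    Set.ncard_lt_ncard (Set.Iic_ssubset_Iic.2 hxy) (hfin y)
  have hwf : WellFoundedLT P := hmono.wellFoundedLT
  funext x
  induction x using WellFoundedLT.induction with
  | ind x ih =>
    rcases eq_or_ne x ⊥ with rfl | hx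
    · exact hbot
    · have hwx := hw x hx
      rw [← Set.Iio_insert, finsum_mem_insert w Set.self_notMem_Iio (hfin' x)] at hwx
      rw [hμ x hx, eq_neg_of_add_eq_zero_left hwx]
      exact congrArg Neg.neg (finsum_mem_congr rfl ih)

namespace Hyperforest

section TwoSection

variable {V : Type*} {E E' : Finset (Finset V)} {e : Finset V} {x y : V}

/-- The 2-section of a hypergraph: the graph joining any two vertices that lie in a common
hyperedge. Connectivity of a hypergraph is reachability in this graph. -/
def twoSection (E : Finset (Finset V)) : SimpleGraph V where
  Adj x y := x ≠ y ∧ ∃ e ∈ E, x ∈ e ∧ y ∈ e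
  symm := ⟨fun _ _ ⟨hne, e, he, hx, hy⟩ => ⟨hne.symm, e, he, hy, hx⟩⟩
  loopless := ⟨fun _ h => h.1 rfl⟩

theorem twoSection_mono (h : E ⊆ E') : twoSection E ≤ twoSection E' :=
  fun _ _ ⟨hne, e, he, hxy⟩ => ⟨hne, e, h he, hxy⟩

theorem reachable_of_mem (he : e ∈ E) (hx : x ∈ e) (hy : y ∈ e) :
    (twoSection E).Reachable x y := by
  by_cases hxy : x = y
  · exact hxy ▸ .rfl
  · exact SimpleGraph.Adj.reachable ⟨hxy, e, he, hx, hy⟩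

/-- The vertices of `e` lie in pairwise distinct connected components of the hypergraph `E`, so
that adding `e` to `E` closes no cycle. -/
def IsScattered (E : Finset (Finset V)) (e : Finset V) : Prop :=
  ∀ x ∈ e, ∀ y ∈ e, (twoSection E).Reachable x y → x = y

theorem IsScattered.mono (h : IsScattered E' e) (hE : E ⊆ E') : IsScattered E e :=
  fun x hx y hy hxy => h x hx y hy (hxy.mono (twoSection_mono hE))

theorem IsScattered.notMem (h : IsScattered E e) (he : 2 ≤ #e) : e ∉ E := by
  obtain ⟨x, hx, y, hy, hxy⟩ := one_lt_card.1 he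
  exact fun hmem => hxy (h x hx y hy (reachable_of_mem hmem hx hy))

/-- Some path from `a` to `b` has `e` as its first hyperedge and the hyperedges of `E` as the
remaining ones. -/
def BeginsPath (E : Finset (Finset V)) (e : Finset V) (a b : V) : Prop :=
  a ∈ e ∧ ∃ v ∈ e, v ≠ a ∧ (twoSection E).Reachable v b

theorem BeginsPath.mono {a b : V} (h : BeginsPath E e a b) (hE : E ⊆ E') :
    BeginsPath E' e a b :=
  let ⟨ha, v, hv, hva, hvb⟩ := h
  ⟨ha, v, hv, hva, hvb.mono (twoSection_mono hE)⟩

end TwoSection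

section Acyclic

variable {V : Type*} [DecidableEq V] {E F : Finset (Finset V)} {e f g : Finset V} {a b x y : V}

theorem reachable_insert_iff :
    (twoSection (insert e E)).Reachable x y ↔ (twoSection E).Reachable x y ∨
      (∃ u ∈ e, (twoSection E).Reachable x u) ∧ ∃ w ∈ e, (twoSection E).Reachable w y := by
  have hmono := twoSection_mono (subset_insert e E)
  constructor
  · rintro ⟨p⟩
    induction p with
    | nil => exact .inl .rfl
    | @cons x z y hxz _ ih =>
      obtain ⟨-, g, hg, hx, hz⟩ := hxz
      rcases mem_insert.1 hg with rfl | hg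
      · rcases ih with hzy | ⟨-, hw⟩
        · exact .inr ⟨⟨x, hx, .rfl⟩, z, hz, hzy⟩
        · exact .inr ⟨⟨x, hx, .rfl⟩, hw⟩
      · have hxz := reachable_of_mem hg hx hz
        exact ih.imp hxz.trans fun ⟨⟨u, hu, hzu⟩, hw⟩ => ⟨⟨u, hu, hxz.trans hzu⟩, hw⟩
  · rintro (h | ⟨⟨u, hu, hxu⟩, w, hw, hwy⟩)
    · exact h.mono hmono
    · exact ((hxu.mono hmono).trans (reachable_of_mem (mem_insert_self e E) hu hw)).trans
        (hwy.mono hmono)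

theorem reachable_iff_erase (he : e ∈ E) :
    (twoSection E).Reachable x y ↔ (twoSection (E.erase e)).Reachable x y ∨
      (∃ u ∈ e, (twoSection (E.erase e)).Reachable x u) ∧
        ∃ w ∈ e, (twoSection (E.erase e)).Reachable w y := by
  rw [← reachable_insert_iff, insert_erase he]

theorem isScattered_insert_iff (ha : a ∉ e) :
    IsScattered E (insert a e) ↔
      IsScattered E e ∧ ∀ v ∈ e, ¬ (twoSection E).Reachable a v := by
  constructor
  · intro h
    refine ⟨fun x hx y hy => h x (mem_insert_of_mem hx) y (mem_insert_of_mem hy), ?_⟩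
    intro v hv hav
    exact ha (h a (mem_insert_self a e) v (mem_insert_of_mem hv) hav ▸ hv)
  · rintro ⟨he, hav⟩ x hx y hy hxy
    rcases mem_insert.1 hx with rfl | hxe <;> rcases mem_insert.1 hy with rfl | hye
    · rfl
    · exact absurd hxy (hav y hye)
    · exact absurd hxy.symm (hav x hxe)
    · exact he x hxe y hye hxy

/-- Acyclicity in the sense of Berge. It characterizes the edge sets of hyperforests
(`Hyperforest.isBergeAcyclic` and `Hyperforest.ofIsBergeAcyclic`) and, unlike the condition on
cycles, can be checked by adding the hyperedges one at a time (`isBergeAcyclic_insert_iff`). -/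
def IsBergeAcyclic (E : Finset (Finset V)) : Prop :=
  ∀ e ∈ E, IsScattered (E.erase e) e

theorem IsBergeAcyclic.mono (hF : IsBergeAcyclic F) (h : E ⊆ F) : IsBergeAcyclic E :=
  fun e he => (hF e (h he)).mono (erase_subset_erase e h)

theorem isBergeAcyclic_insert_iff (he : e ∉ E) :
    IsBergeAcyclic (insert e E) ↔ IsBergeAcyclic E ∧ IsScattered E e := by
  constructor
  · intro h
    have hsc := h e (mem_insert_self e E)
    rw [erase_insert he] at hsc
    exact ⟨h.mono (subset_insert e E), hsc⟩
  · rintro ⟨hE, hsc⟩ g hg x hx y hy hxy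
    rcases eq_or_ne g e with rfl | hge
    · exact hsc x hx y hy (by rwa [erase_insert he] at hxy)
    have hgE := mem_of_mem_insert_of_ne hg hge
    have hmono := twoSection_mono (erase_subset g E)
    rw [erase_insert_of_ne hge.symm, reachable_insert_iff] at hxy
    rcases hxy with hxy | ⟨⟨u, hu, hxu⟩, w, hw, hwy⟩
    · exact hE g hgE x hx y hy hxy
    · have huw : (twoSection E).Reachable u w :=
        ((hxu.mono hmono).symm.trans (reachable_of_mem hgE hx hy)).trans (hwy.mono hmono).symm
      obtain rfl := hsc u hu w hw huw
      exact hE g hgE x hx y hy (hxu.trans hwy)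

theorem IsBergeAcyclic.eq_of_one_lt_card_inter (hE : IsBergeAcyclic E) (he : e ∈ E) (hf : f ∈ E)
    (h : 1 < #(e ∩ f)) : e = f := by
  obtain ⟨x, hx, y, hy, hxy⟩ := one_lt_card.1 h
  rw [mem_inter] at hx hy
  by_contra hef
  exact hxy (hE e he x hx.1 y hy.1
    (reachable_of_mem (mem_erase.2 ⟨Ne.symm hef, hf⟩) hx.2 hy.2))

theorem IsBergeAcyclic.eq_of_subset_of_subset (hE : IsBergeAcyclic E) (he : e ∈ E) (hf : f ∈ E)
    (hg : 2 ≤ #g) (hge : g ⊆ e) (hgf : g ⊆ f) : e = f :=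
  hE.eq_of_one_lt_card_inter he hf (hg.trans (card_le_card (subset_inter hge hgf)))

theorem exists_beginsPath (hab : a ≠ b) (h : (twoSection E).Reachable a b) :
    ∃ e ∈ E, BeginsPath (E.erase e) e a b := by
  induction E using Finset.strongInduction with
  | H E ih =>
    obtain ⟨f, hf, haf⟩ : ∃ f ∈ E, a ∈ f := by
      obtain ⟨p⟩ := h
      cases p with
      | nil => exact absurd rfl hab
      | cons hadj _ =>
        obtain ⟨-, f, hf, haf, -⟩ := hadj
        exact ⟨f, hf, haf⟩
    by_cases hfb : (twoSection (E.erase f)).Reachable a b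
    · obtain ⟨e, he, hbegin⟩ := ih _ (erase_ssubset hf) hfb
      exact ⟨e, mem_of_mem_erase he, hbegin.mono (erase_subset_erase e (erase_subset f E))⟩
    · obtain ⟨-, w, hw, hwb⟩ := ((reachable_iff_erase hf).1 h).resolve_left hfb
      exact ⟨f, hf, haf, w, hw, fun hwa => hfb (hwa ▸ hwb), hwb⟩

theorem BeginsPath.reachable (he : e ∈ E) (h : BeginsPath (E.erase e) e a b) :
    (twoSection E).Reachable a b :=
  let ⟨ha, _, hv, _, hvb⟩ := h
  (reachable_of_mem he ha hv).trans (hvb.mono (twoSection_mono (erase_subset e E)))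

theorem IsBergeAcyclic.eq_of_beginsPath (hE : IsBergeAcyclic E) (he : e ∈ E) (hf : f ∈ E)
    (h : BeginsPath (E.erase e) e a b) (h' : BeginsPath (E.erase f) f a b) : e = f := by
  obtain ⟨hae, v, hv, hva, hvb⟩ := h
  obtain ⟨haf, w, hw, hwa, hwb⟩ := h'
  by_contra hef
  have hf' : f ∈ E.erase e := mem_erase.2 ⟨Ne.symm hef, hf⟩
  have hvb' : (twoSection ((E.erase e).erase f)).Reachable v b := by
    rcases (reachable_iff_erase hf').1 hvb with hvb' | ⟨⟨u, hu, hvu⟩, -⟩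
    · exact hvb'
    · have hva' : (twoSection (E.erase e)).Reachable v a :=
        (hvu.mono (twoSection_mono (erase_subset f _))).trans (reachable_of_mem hf' hu haf)
      exact absurd (hE e he v hv a hae hva') hva
  have haw : (twoSection (E.erase f)).Reachable a w :=
    ((reachable_of_mem (mem_erase.2 ⟨hef, he⟩) hae hv).trans
      (hvb'.mono (twoSection_mono (erase_subset_erase f (erase_subset e E))))).trans hwb.symm
  exact hwa (hE f hf a haf w hw haw).symm

open scoped Classical in
theorem IsBergeAcyclic.card_filter_beginsPath (hE : IsBergeAcyclic E) (hab : a ≠ b) :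
    #{e ∈ E | BeginsPath (E.erase e) e a b} =
      if (twoSection E).Reachable a b then 1 else 0 := by
  split_ifs with h
  · obtain ⟨e, he, hbegin⟩ := exists_beginsPath hab h
    refine card_eq_one.2 ⟨e, eq_singleton_iff_unique_mem.2 ⟨mem_filter.2 ⟨he, hbegin⟩, ?_⟩⟩
    intro f hf
    rw [mem_filter] at hf
    exact hE.eq_of_beginsPath hf.1 he hf.2 hbegin
  · exact card_eq_zero.2 (filter_eq_empty_iff.2 fun _ he hbegin => h (hbegin.reachable he))

open scoped Classical in
theorem IsBergeAcyclic.card_filter_beginsPath_add_one (hE : IsBergeAcyclic E) (he : e ∈ E)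
    (hb : ∃ v ∈ e, (twoSection E).Reachable v b) :
    #{v ∈ e | BeginsPath (E.erase e) e v b} + 1 = #e := by
  obtain ⟨w, hw, hwb⟩ : ∃ w ∈ e, (twoSection (E.erase e)).Reachable w b := by
    obtain ⟨v, hv, hvb⟩ := hb
    exact ((reachable_iff_erase he).1 hvb).elim (fun h => ⟨v, hv, h⟩) And.right
  have hfilter : {v ∈ e | BeginsPath (E.erase e) e v b} = e.erase w := by
    ext v
    rw [mem_filter, mem_erase, and_comm, and_congr_left_iff]
    intro hv
    constructor
    · rintro ⟨-, u, hu, huv, hub⟩ rfl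
      exact huv (hE e he u hu v hw (hub.trans hwb.symm))
    · exact fun hvw => ⟨hv, w, hw, hvw.symm, hwb⟩
  rw [hfilter, card_erase_add_one hw]

open scoped Classical in
/-- Double counting of the pairs of a vertex `v ≠ b` in the component of `b` and the first
hyperedge on the path from `v` to `b`. -/
theorem IsBergeAcyclic.sum_card_sub_one (hE : IsBergeAcyclic E) {s : Finset V}
    (hs : ∀ e ∈ E, e ⊆ s) (hb : b ∈ s) :
    ∑ e ∈ E with ∃ v ∈ e, (twoSection E).Reachable v b, ((#e : ℤ) - 1) =
      #{v ∈ s | (twoSection E).Reachable v b} - 1 := by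
  set C : Finset V := {v ∈ s | (twoSection E).Reachable v b} with hC
  set D : Finset (Finset V) := {e ∈ E | ∃ v ∈ e, (twoSection E).Reachable v b} with hD
  have hbC : b ∈ C := mem_filter.2 ⟨hb, .rfl⟩
  have hdouble := sum_card_bipartiteAbove_eq_sum_card_bipartiteBelow
    (s := C.erase b) (t := D) fun v e => BeginsPath (E.erase e) e v b
  have habove : ∀ v ∈ C.erase b,
      #(D.bipartiteAbove (fun v e => BeginsPath (E.erase e) e v b) v) = 1 := by
    intro v hv
    obtain ⟨hvb, hvC⟩ := mem_erase.1 hv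
    have hreach := (mem_filter.1 hvC).2
    rw [bipartiteAbove, hD, filter_filter, ← if_pos (α := ℕ) hreach (t := 1) (e := 0),
      ← hE.card_filter_beginsPath hvb]
    congr 1
    exact filter_congr fun e _ => and_iff_right_of_imp fun h => ⟨v, h.1, hreach⟩
  have hbelow : ∀ e ∈ D,
      #((C.erase b).bipartiteBelow (fun v e => BeginsPath (E.erase e) e v b) e) + 1 = #e := by
    intro e heD
    obtain ⟨he, hmeet⟩ := mem_filter.1 heD
    rw [← hE.card_filter_beginsPath_add_one he hmeet]
    congr 2
    ext v
    simp only [mem_bipartiteBelow, mem_erase, mem_filter, hC]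
    refine and_congr_left fun h => ⟨fun _ => h.1, fun hv => ⟨?_, hs e he hv, h.reachable he⟩⟩
    rintro rfl
    obtain ⟨-, u, hu, huv, hreach⟩ := h
    exact huv (hE e he u hu v hv hreach)
  rw [sum_congr rfl habove, sum_const, smul_eq_mul, mul_one] at hdouble
  rw [← card_erase_add_one hbC, hdouble]
  push_cast
  rw [add_sub_cancel_right]
  refine sum_congr rfl fun e he => ?_
  rw [← hbelow e he, Nat.cast_succ, add_sub_cancel_right]

/-- A path of `E` that leaves the hyperedge `f` of `F` can come back only through the vertex at
which it left, so its excursions outside `f` can be cut off. -/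
theorem IsBergeAcyclic.reachable_filter_subset (hF : IsBergeAcyclic F)
    (hEF : ∀ e ∈ E, ∃ f ∈ F, e ⊆ f) (hf : f ∈ F) (hx : x ∈ f) (hy : y ∈ f)
    (h : (twoSection E).Reachable x y) : (twoSection (E.filter (· ⊆ f))).Reachable x y := by
  suffices ∃ z ∈ f, (twoSection (F.erase f)).Reachable x z ∧
      (twoSection (E.filter (· ⊆ f))).Reachable z y by
    obtain ⟨z, hz, hxz, hzy⟩ := this
    rwa [hF f hf x hx z hz hxz]
  obtain ⟨p⟩ := h
  clear hx
  induction p with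
  | nil => exact ⟨_, hy, .rfl, .rfl⟩
  | @cons x v y hxv _ ih =>
    obtain ⟨-, e, he, hxe, hve⟩ := hxv
    obtain ⟨z, hz, hvz, hzy⟩ := ih hy
    by_cases hef : e ⊆ f
    · obtain rfl := hF f hf v (hef hve) z hz hvz
      exact ⟨x, hef hxe, .rfl, (reachable_of_mem (mem_filter.2 ⟨he, hef⟩) hxe hve).trans hzy⟩
    · obtain ⟨f', hf', hef'⟩ := hEF e he
      have hne : f' ≠ f := fun h => hef (h ▸ hef')
      exact ⟨z, hz, (reachable_of_mem (mem_erase.2 ⟨hne, hf'⟩) (hef' hxe) (hef' hve)).trans hvz,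
        hzy⟩

theorem IsBergeAcyclic.of_forall_filter_subset (hF : IsBergeAcyclic F)
    (hEF : ∀ e ∈ E, ∃ f ∈ F, e ⊆ f) (h : ∀ f ∈ F, IsBergeAcyclic (E.filter (· ⊆ f))) :
    IsBergeAcyclic E := by
  intro e he x hx y hy hxy
  obtain ⟨f, hf, hef⟩ := hEF e he
  have hlocal := hF.reachable_filter_subset (fun g hg => hEF g (mem_of_mem_erase hg)) hf
    (hef hx) (hef hy) hxy
  rw [filter_erase] at hlocal
  exact h f hf e (mem_filter.2 ⟨he, hef⟩) x hx y hy hlocal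

end Acyclic

section Cycles

variable {V : Type*} [DecidableEq V] {E : Finset (Finset V)} {e : Finset V}

theorem exists_reachable_erase_of_adjacent {n : ℕ} {v : Fin (n + 1) → V}
    (hadj : ∀ i : Fin n, ∃ f ∈ E, v i.castSucc ∈ f ∧ v i.succ ∈ f) (hlast : v (Fin.last n) ∈ e) :
    ∃ i, v i ∈ e ∧ (twoSection (E.erase e)).Reachable (v 0) (v i) := by
  induction n with
  | zero => exact ⟨0, hlast, .rfl⟩
  | succ n ih =>
    by_cases h0 : v 0 ∈ e
    · exact ⟨0, h0, .rfl⟩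
    · obtain ⟨i, hi, hreach⟩ := ih (v := Fin.tail v) (fun i => hadj i.succ) hlast
      obtain ⟨f, hf, hf0, hf1⟩ := hadj 0
      have hfe : f ≠ e := fun h => h0 (h ▸ hf0)
      exact ⟨i.succ, hi, (reachable_of_mem (mem_erase.2 ⟨hfe, hf⟩) hf0 hf1).trans hreach⟩

theorem IsBergeAcyclic.mem_of_path (hE : IsBergeAcyclic E) (he : e ∈ E) {n : ℕ}
    {v : Fin (n + 1) → V} (hv : Function.Injective v)
    (hadj : ∀ i : Fin n, ∃ f ∈ E, v i.castSucc ∈ f ∧ v i.succ ∈ f) (h0 : v 0 ∈ e)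
    (hlast : v (Fin.last n) ∈ e) (i : Fin (n + 1)) : v i ∈ e := by
  induction n with
  | zero => rwa [Fin.fin_one_eq_zero i]
  | succ n ih =>
    have hadj' (i : Fin n) : ∃ f ∈ E, Fin.tail v i.castSucc ∈ f ∧ Fin.tail v i.succ ∈ f :=
      hadj i.succ
    suffices h1 : v (Fin.succ 0) ∈ e by
      induction i using Fin.cases with
      | zero => exact h0
      | succ i => exact ih (hv.comp (Fin.succ_injective _)) hadj' h1 hlast i
    obtain ⟨f, hf, hf0, hf1⟩ := hadj 0
    obtain rfl | hfe := eq_or_ne f e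
    · exact hf1
    · obtain ⟨j, hj, hreach⟩ := exists_reachable_erase_of_adjacent hadj' hlast
      have hreach0 : (twoSection (E.erase e)).Reachable (v 0) (v j.succ) :=
        (reachable_of_mem (mem_erase.2 ⟨hfe, hf⟩) hf0 hf1).trans hreach
      exact absurd (hv (hE e he _ h0 _ hj hreach0)).symm (Fin.succ_ne_zero j)

theorem IsBergeAcyclic.exists_mem_of_cycle (hE : IsBergeAcyclic E) (k : ℕ) (v : Fin (k + 3) → V)
    (hv : Function.Injective v)
    (hadj : ∀ j : Fin (k + 3), ∃ e ∈ E, v j ∈ e ∧ v (j + 1) ∈ e) :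
    ∃ e ∈ E, ∀ j, v j ∈ e := by
  obtain ⟨e, he, hlast, h0⟩ := hadj (Fin.last (k + 2))
  rw [Fin.last_add_one] at h0
  have hpath (i : Fin (k + 2)) : ∃ f ∈ E, v i.castSucc ∈ f ∧ v i.succ ∈ f := by
    simpa only [Fin.coeSucc_eq_succ] using hadj i.castSucc
  exact ⟨e, he, hE.mem_of_path he hv hpath h0 hlast⟩

/-- Together with `e` the path `p` forms a cycle. The hyperedge containing this cycle shares `x` and
`y` with `e`, so it is `e`. -/
theorem snd_mem_of_isPath (F : Hyperforest V) (hE : E ⊆ F.edges) (he : e ∈ F.edges) {x y : V}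
    {p : (twoSection E).Walk x y} (hp : p.IsPath) (hxy : x ≠ y) (hx : x ∈ e) (hy : y ∈ e) :
    p.snd ∈ e := by
  obtain hlen | hlen | ⟨k, hlen⟩ : p.length = 0 ∨ p.length = 1 ∨ ∃ k, p.length = k + 2 := by
    rcases p.length with _ | _ | k
    exacts [.inl rfl, .inr (.inl rfl), .inr (.inr ⟨k, rfl⟩)]
  · exact absurd (SimpleGraph.Walk.eq_of_length_eq_zero hlen) hxy
  · rwa [SimpleGraph.Walk.snd, ← hlen, p.getVert_length]
  have hgetLast : p.getVert (k + 2) = y := hlen ▸ p.getVert_length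
  have hinj : Function.Injective fun j : Fin (k + 3) => p.getVert j := fun i j hij =>
    Fin.ext (hp.getVert_injOn (by grind) (by grind) hij)
  have hadj (j : Fin (k + 3)) :
      ∃ f ∈ F.edges, p.getVert j ∈ f ∧ p.getVert (j + 1 : Fin (k + 3)) ∈ f := by
    induction j using Fin.lastCases with
    | last =>
      rw [Fin.last_add_one, Fin.val_last, hgetLast, Fin.val_zero, p.getVert_zero]
      exact ⟨e, he, hy, hx⟩
    | cast i =>
      rw [Fin.coeSucc_eq_succ, Fin.val_castSucc, Fin.val_succ]
      obtain ⟨-, f, hf, hif⟩ := p.adj_getVert_succ (i.isLt.trans_eq hlen.symm)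
      exact ⟨f, hE hf, hif⟩
  obtain ⟨g, hg, hmem⟩ := F.cycles k _ hinj hadj
  have hxg : x ∈ g := p.getVert_zero ▸ hmem 0
  have hyg : y ∈ g := hgetLast ▸ hmem (Fin.last (k + 2))
  have hge : g = e := by
    by_contra hne
    exact (F.inter g hg e he hne).not_gt
      (one_lt_card.2 ⟨x, mem_inter.2 ⟨hxg, hx⟩, y, mem_inter.2 ⟨hyg, hy⟩, hxy⟩)
  exact hge ▸ hmem 1

theorem isBergeAcyclic (F : Hyperforest V) : IsBergeAcyclic F.edges := by
  intro e he x hx y hy hreach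
  by_contra hxy
  obtain ⟨p, hp⟩ := hreach.exists_isPath
  have hsnd : p.snd ∈ e := F.snd_mem_of_isPath (erase_subset e _) he hp hxy hx hy
  obtain ⟨hne, f, hf, hxf, hsndf⟩ := p.adj_snd (SimpleGraph.Walk.not_nil_of_ne hxy)
  obtain ⟨hfe, hf⟩ := mem_erase.1 hf
  exact (F.inter f hf e he hfe).not_gt
    (one_lt_card.2 ⟨x, mem_inter.2 ⟨hxf, hx⟩, p.snd, mem_inter.2 ⟨hsndf, hsnd⟩, hne⟩)

/-- A hyperforest with the given Berge-acyclic set of hyperedges. -/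
def ofIsBergeAcyclic (E : Finset (Finset V)) (hE : IsBergeAcyclic E)
    (htwo : ∀ e ∈ E, 2 ≤ #e) : Hyperforest V where
  edges := E
  two_le := htwo
  inter _ he _ hf hne :=
    not_lt.1 fun h => hne (hE.eq_of_one_lt_card_inter he hf h)
  cycles := hE.exists_mem_of_cycle

end Cycles

section Subforests

variable {V : Type*} [DecidableEq V] {E F K : Finset (Finset V)} {e : Finset V}

open scoped Classical in
/-- The hyperedge sets of the hyperforests below a hyperforest with hyperedge set `F`. -/
noncomputable def subforests (F : Finset (Finset V)) : Finset (Finset (Finset V)) :=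
  {E ∈ (F.biUnion powerset).powerset | IsBergeAcyclic E ∧ ∀ e ∈ E, 2 ≤ #e}

theorem mem_subforests :
    E ∈ subforests F ↔ IsBergeAcyclic E ∧ ∀ e ∈ E, 2 ≤ #e ∧ ∃ f ∈ F, e ⊆ f := by
  simp only [subforests, mem_filter, mem_powerset, subset_iff (s₁ := E), mem_biUnion]
  grind

open scoped Classical in
/-- The hyperedges whose addition to the subforest `K` of `F` gives a larger subforest of `F`. -/
noncomputable def extendingEdges (F K : Finset (Finset V)) : Finset (Finset V) :=
  {e ∈ F.biUnion powerset | 2 ≤ #e ∧ IsScattered K e}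

theorem mem_extendingEdges :
    e ∈ extendingEdges F K ↔ (∃ f ∈ F, e ⊆ f) ∧ 2 ≤ #e ∧ IsScattered K e := by
  simp only [extendingEdges, mem_filter, mem_biUnion, mem_powerset]

theorem notMem_of_mem_extendingEdges (he : e ∈ extendingEdges F K) : e ∉ K :=
  let ⟨_, htwo, hsc⟩ := mem_extendingEdges.1 he
  hsc.notMem htwo

theorem insert_mem_subforests (hK : K ∈ subforests F) (he : e ∈ extendingEdges F K) :
    insert e K ∈ subforests F := by
  have hnotMem := notMem_of_mem_extendingEdges he
  obtain ⟨hef, htwo, hsc⟩ := mem_extendingEdges.1 he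
  rw [mem_subforests] at hK ⊢
  exact ⟨(isBergeAcyclic_insert_iff hnotMem).2 ⟨hK.1, hsc⟩,
    forall_mem_insert _ _ _ |>.2 ⟨⟨htwo, hef⟩, hK.2⟩⟩

theorem erase_mem_subforests (hE : E ∈ subforests F) : E.erase e ∈ subforests F := by
  rw [mem_subforests] at hE ⊢
  exact ⟨hE.1.mono (erase_subset e E), fun g hg => hE.2 g (mem_of_mem_erase hg)⟩

theorem mem_extendingEdges_erase (hE : E ∈ subforests F) (he : e ∈ E) :
    e ∈ extendingEdges F (E.erase e) := by
  rw [mem_subforests] at hE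
  exact mem_extendingEdges.2 ⟨(hE.2 e he).2, (hE.2 e he).1, hE.1 e he⟩

theorem sum_subforests_sum_erase {M : Type*} [AddCommMonoid M] (F : Finset (Finset V))
    (φ : Finset (Finset V) → Finset V → M) :
    ∑ E ∈ subforests F, ∑ e ∈ E, φ (E.erase e) e =
      ∑ K ∈ subforests F, ∑ e ∈ extendingEdges F K, φ K e := by
  rw [sum_sigma', sum_sigma']
  refine sum_bij' (fun p _ => ⟨p.1.erase p.2, p.2⟩) (fun q _ => ⟨insert q.2 q.1, q.2⟩)
    ?_ ?_ ?_ ?_ fun _ _ => rfl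
  · rintro ⟨E, e⟩ hE
    obtain ⟨hE, he⟩ := mem_sigma.1 hE
    exact mem_sigma.2 ⟨erase_mem_subforests hE, mem_extendingEdges_erase hE he⟩
  · rintro ⟨K, e⟩ hK
    obtain ⟨hK, he⟩ := mem_sigma.1 hK
    exact mem_sigma.2 ⟨insert_mem_subforests hK he, mem_insert_self e K⟩
  · rintro ⟨E, e⟩ hE
    simp only [insert_erase (mem_sigma.1 hE).2]
  · rintro ⟨K, e⟩ hK
    simp only [erase_insert (notMem_of_mem_extendingEdges (mem_sigma.1 hK).2)]

end Subforests

section Weight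

variable {V : Type*} {E : Finset (Finset V)} {e : Finset V}

/-- The Möbius value of a single hyperedge, meaningful only for `2 ≤ #e`. -/
def edgeWeight (e : Finset V) : ℤ :=
  -((#e - 2).factorial : ℤ)

/-- The product formula for the Möbius function at the hyperforest with hyperedge set `E`. -/
def mobiusWeight (E : Finset (Finset V)) : ℤ :=
  ∏ e ∈ E, edgeWeight e

theorem edgeWeight_of_card_eq_two (he : #e = 2) : edgeWeight e = -1 := by
  simp [edgeWeight, he]

theorem mobiusWeight_eq_finprod (htwo : ∀ e ∈ E, 2 ≤ #e) :
    mobiusWeight E =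
      ∏ᶠ j ∈ Set.Ici 2, (-(((j - 2).factorial : ℕ) : ℤ)) ^ #{e ∈ E | #e = j} := by
  have hfiber : mobiusWeight E =
      ∏ j ∈ E.image card, (-(((j - 2).factorial : ℕ) : ℤ)) ^ #{e ∈ E | #e = j} :=
    prod_comp (fun j : ℕ => -((j - 2).factorial : ℤ)) card
  rw [hfiber]
  refine (finprod_mem_eq_prod_of_inter_mulSupport_eq _ ?_).symm
  ext j
  simp only [Set.mem_inter_iff, Set.mem_Ici, mem_coe, mem_image]
  refine and_congr_left fun hj => ⟨fun _ => ?_, fun ⟨e, he, hej⟩ => hej ▸ htwo e he⟩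
  by_contra! hne
  refine hj ?_
  simp only [filter_eq_empty_iff.2 fun e he => hne e he, card_empty, pow_zero]

variable [DecidableEq V]

theorem edgeWeight_insert {a : V} (ha : a ∉ e) (he : 2 ≤ #e) :
    edgeWeight (insert a e) = edgeWeight e * (#e - 1) := by
  obtain ⟨k, hk⟩ := Nat.exists_eq_add_of_le' he
  rw [edgeWeight, edgeWeight, card_insert_of_notMem ha, hk, Nat.add_sub_cancel,
    show k + 2 + 1 - 2 = k + 1 from rfl, Nat.factorial_succ]
  push_cast
  ring

theorem mobiusWeight_erase_mul (he : e ∈ E) :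
    mobiusWeight (E.erase e) * edgeWeight e = mobiusWeight E :=
  prod_erase_mul E edgeWeight he

theorem sum_mobiusWeight_mul_sum (F : Finset (Finset V))
    (ψ : Finset (Finset V) → Finset V → ℤ) :
    ∑ E ∈ subforests F, mobiusWeight E * ∑ e ∈ E, ψ (E.erase e) e =
      ∑ K ∈ subforests F, mobiusWeight K * ∑ e ∈ extendingEdges F K, edgeWeight e * ψ K e := by
  simp only [mul_sum, ← mul_assoc]
  rw [← sum_subforests_sum_erase F fun K e => mobiusWeight K * edgeWeight e * ψ K e]
  refine sum_congr rfl fun E _ => sum_congr rfl fun e he => ?_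
  rw [mobiusWeight_erase_mul he]

end Weight

section SingleEdge

variable {V : Type*} [DecidableEq V] {K : Finset (Finset V)} {S e g : Finset V} {a b : V}

theorem mem_extendingEdges_singleton :
    e ∈ extendingEdges {S} K ↔ e ⊆ S ∧ 2 ≤ #e ∧ IsScattered K e := by
  simp only [mem_extendingEdges, mem_singleton, exists_eq_left]

open scoped Classical in
/-- The sets `g` not containing `a` that meet the component of `b` and for which `insert a g` may
be added to the subforest `K` of `{S}`, so that `insert a g` begins a path from `a` to `b`. -/
noncomputable def pathTails (S : Finset V) (K : Finset (Finset V)) (a b : V) :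
    Finset (Finset V) :=
  {g ∈ (S.erase a).powerset | IsScattered K (insert a g) ∧ ∃ v ∈ g, (twoSection K).Reachable v b}

theorem mem_pathTails : g ∈ pathTails S K a b ↔ (g ⊆ S ∧ a ∉ g) ∧ IsScattered K (insert a g) ∧
    ∃ v ∈ g, (twoSection K).Reachable v b := by
  simp only [pathTails, mem_filter, mem_powerset, subset_erase]

open scoped Classical in
theorem sum_extendingEdges_beginsPath {M : Type*} [AddCommMonoid M] (ha : a ∈ S)
    (c : Finset V → M) :
    ∑ e ∈ extendingEdges {S} K with BeginsPath K e a b, c e =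
      ∑ g ∈ pathTails S K a b, c (insert a g) := by
  refine sum_nbij' (·.erase a) (insert a) ?_ ?_ ?_ ?_ ?_
  · intro e he
    simp only [mem_filter, mem_extendingEdges_singleton] at he
    obtain ⟨⟨heS, -, hsc⟩, hae, v, hv, hva, hvb⟩ := he
    refine mem_pathTails.2 ⟨⟨(erase_subset a e).trans heS, notMem_erase a e⟩, ?_, v,
      mem_erase.2 ⟨hva, hv⟩, hvb⟩
    rwa [insert_erase hae]
  · intro g hg
    obtain ⟨⟨hgS, hag⟩, hsc, v, hv, hvb⟩ := mem_pathTails.1 hg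
    have hva : v ≠ a := fun h => hag (h ▸ hv)
    simp only [mem_filter, mem_extendingEdges_singleton]
    exact ⟨⟨insert_subset ha hgS, one_lt_card.2 ⟨a, mem_insert_self a g, v,
      mem_insert_of_mem hv, hva.symm⟩, hsc⟩, mem_insert_self a g, v, mem_insert_of_mem hv, hva,
      hvb⟩
  · intro e he
    exact insert_erase (mem_filter.1 he).2.1
  · intro g hg
    exact erase_insert (mem_pathTails.1 hg).1.2
  · intro e he
    rw [insert_erase (mem_filter.1 he).2.1]

open scoped Classical in
theorem filter_extendingEdges_eq_filter_pathTails :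
    {e ∈ extendingEdges {S} K | ¬ (twoSection (insert e K)).Reachable a b ∧
      ∃ v ∈ e, (twoSection (insert e K)).Reachable v b} = {g ∈ pathTails S K a b | 2 ≤ #g} := by
  ext e
  have hmeet : (∃ v ∈ e, (twoSection (insert e K)).Reachable v b) ↔
      ∃ v ∈ e, (twoSection K).Reachable v b := by
    simp only [reachable_insert_iff]
    grind
  simp only [mem_filter, mem_extendingEdges_singleton, mem_pathTails, hmeet]
  constructor
  · rintro ⟨⟨heS, htwo, hsc⟩, hab, hb⟩
    have hav : ∀ v ∈ e, ¬ (twoSection K).Reachable a v := fun v hv hav =>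
      hab (reachable_insert_iff.2 (.inr ⟨⟨v, hv, hav⟩, hb⟩))
    have hae : a ∉ e := fun hae => hav a hae .rfl
    exact ⟨⟨⟨heS, hae⟩, (isScattered_insert_iff hae).2 ⟨hsc, hav⟩, hb⟩, htwo⟩
  · rintro ⟨⟨⟨heS, hae⟩, hsc, v, hv, hvb⟩, htwo⟩
    obtain ⟨hsc, hav⟩ := (isScattered_insert_iff hae).1 hsc
    refine ⟨⟨heS, htwo, hsc⟩, fun hab => ?_, v, hv, hvb⟩
    rcases reachable_insert_iff.1 hab with hab | ⟨⟨u, hu, hau⟩, -⟩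
    · exact hav v hv (hab.trans hvb.symm)
    · exact hav u hu hau

open scoped Classical in
theorem card_filter_pathTails_card_lt_two :
    #{g ∈ pathTails S K a b | ¬ 2 ≤ #g} =
      if (twoSection K).Reachable a b then 0 else #{v ∈ S | (twoSection K).Reachable v b} := by
  split_ifs with hab
  · refine card_eq_zero.2 (filter_eq_empty_iff.2 fun g hg _ => ?_)
    obtain ⟨⟨-, hag⟩, hsc, v, hv, hvb⟩ := mem_pathTails.1 hg
    exact ((isScattered_insert_iff hag).1 hsc).2 v hv (hab.trans hvb.symm)
  · rw [← card_image_of_injective _ (singleton_injective (α := V))]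
    congr 1
    ext g
    simp only [mem_filter, mem_pathTails, mem_image]
    constructor
    · rintro ⟨⟨⟨hgS, -⟩, -, v, hv, hvb⟩, hcard⟩
      have hg : {v} = g := eq_of_subset_of_card_le (singleton_subset_iff.2 hv)
        (by rw [card_singleton]; omega)
      exact ⟨v, ⟨hgS hv, hvb⟩, hg⟩
    · rintro ⟨v, ⟨hvS, hvb⟩, rfl⟩
      have hav : ¬ (twoSection K).Reachable a v := fun h => hab (h.trans hvb)
      have hav' : a ∉ ({v} : Finset V) := fun h => hav (mem_singleton.1 h ▸ .rfl)
      refine ⟨⟨⟨singleton_subset_iff.2 hvS, hav'⟩, (isScattered_insert_iff hav').2 ⟨?_, ?_⟩,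
        v, mem_singleton_self v, hvb⟩, by simp only [card_singleton]; omega⟩
      · intro x hx y hy _
        rw [mem_singleton.1 hx, mem_singleton.1 hy]
      · exact fun w hw => mem_singleton.1 hw ▸ hav

open scoped Classical in
/-- Removing `a` from the first hyperedge of the path from `a` to `b` disconnects `a` from `b`; a
hyperedge with two vertices leaves only a vertex of the component of `b`. -/
theorem sum_edgeWeight_beginsPath (ha : a ∈ S) :
    ∑ e ∈ extendingEdges {S} K with BeginsPath K e a b, edgeWeight e =
      ∑ e ∈ extendingEdges {S} K with ¬ (twoSection (insert e K)).Reachable a b ∧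
        ∃ v ∈ e, (twoSection (insert e K)).Reachable v b, edgeWeight e * (#e - 1) -
      if (twoSection K).Reachable a b then 0
        else (#{v ∈ S | (twoSection K).Reachable v b} : ℤ) := by
  have hlarge : ∀ g ∈ {g ∈ pathTails S K a b | 2 ≤ #g},
      edgeWeight (insert a g) = edgeWeight g * (#g - 1) := by
    intro g hg
    obtain ⟨hg, htwo⟩ := mem_filter.1 hg
    exact edgeWeight_insert (mem_pathTails.1 hg).1.2 htwo
  have hsmall : ∀ g ∈ {g ∈ pathTails S K a b | ¬ 2 ≤ #g}, edgeWeight (insert a g) = -1 := by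
    intro g hg
    obtain ⟨hg, hcard⟩ := mem_filter.1 hg
    obtain ⟨⟨-, hag⟩, -, v, hv, -⟩ := mem_pathTails.1 hg
    have hpos : 0 < #g := card_pos.2 ⟨v, hv⟩
    exact edgeWeight_of_card_eq_two (by rw [card_insert_of_notMem hag]; omega)
  rw [sum_extendingEdges_beginsPath ha, ← sum_filter_add_sum_filter_not _ (2 ≤ #·),
    sum_congr rfl hlarge, sum_congr rfl hsmall, filter_extendingEdges_eq_filter_pathTails,
    sum_const, card_filter_pathTails_card_lt_two, nsmul_eq_mul, mul_neg_one, ← sub_eq_add_neg]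
  split_ifs <;> rfl

open scoped Classical in
theorem sum_mobiusWeight_reachable (F : Finset (Finset V)) (hab : a ≠ b) :
    ∑ E ∈ subforests F with (twoSection E).Reachable a b, mobiusWeight E =
      ∑ K ∈ subforests F, mobiusWeight K *
        ∑ e ∈ extendingEdges F K with BeginsPath K e a b, edgeWeight e := by
  have hmarked := sum_mobiusWeight_mul_sum F fun K e => if BeginsPath K e a b then 1 else 0
  simp only [mul_ite, mul_one, mul_zero, ← sum_filter] at hmarked
  rw [← hmarked, sum_filter]
  refine sum_congr rfl fun E hE => ?_
  rw [sum_const, (mem_subforests.1 hE).1.card_filter_beginsPath hab]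
  split_ifs <;> simp

open scoped Classical in
theorem sum_mobiusWeight_not_reachable (F : Finset (Finset V)) (a b : V) :
    ∑ E ∈ subforests F with ¬ (twoSection E).Reachable a b,
        mobiusWeight E * ∑ e ∈ E with ∃ v ∈ e, (twoSection E).Reachable v b, ((#e : ℤ) - 1) =
      ∑ K ∈ subforests F, mobiusWeight K *
        ∑ e ∈ extendingEdges F K with ¬ (twoSection (insert e K)).Reachable a b ∧
          ∃ v ∈ e, (twoSection (insert e K)).Reachable v b, edgeWeight e * (#e - 1) := by
  have hmarked := sum_mobiusWeight_mul_sum F fun K e =>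
    if ¬ (twoSection (insert e K)).Reachable a b ∧
      ∃ v ∈ e, (twoSection (insert e K)).Reachable v b then (#e : ℤ) - 1 else 0
  simp only [mul_ite, mul_zero, ← sum_filter (M := ℤ)] at hmarked
  rw [← hmarked, sum_filter]
  refine sum_congr rfl fun E _ => ?_
  have hfilter : {e ∈ E | ¬ (twoSection (insert e (E.erase e))).Reachable a b ∧
        ∃ v ∈ e, (twoSection (insert e (E.erase e))).Reachable v b} =
      {e ∈ E | ¬ (twoSection E).Reachable a b ∧ ∃ v ∈ e, (twoSection E).Reachable v b} :=
    filter_congr fun e he => by rw [insert_erase he]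
  rw [hfilter]
  by_cases hab : (twoSection E).Reachable a b <;> simp [hab]

theorem sum_mobiusWeight_subforests_singleton (hS : 2 ≤ #S) :
    ∑ E ∈ subforests {S}, mobiusWeight E = 0 := by
  classical
  obtain ⟨a, ha, b, hb, hab⟩ := one_lt_card.1 hS
  have hcount : ∀ E ∈ subforests {S},
      ∑ e ∈ E with ∃ v ∈ e, (twoSection E).Reachable v b, ((#e : ℤ) - 1) =
        #{v ∈ S | (twoSection E).Reachable v b} - 1 := by
    intro E hE
    obtain ⟨hacyclic, hsub⟩ := mem_subforests.1 hE
    exact hacyclic.sum_card_sub_one (fun e he => by simpa using (hsub e he).2) hb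
  have hcut : ∑ E ∈ subforests {S} with (twoSection E).Reachable a b, mobiusWeight E =
      -∑ E ∈ subforests {S} with ¬ (twoSection E).Reachable a b, mobiusWeight E := by
    rw [sum_mobiusWeight_reachable {S} hab]
    simp only [sum_edgeWeight_beginsPath ha, mul_sub (mobiusWeight _), sum_sub_distrib]
    rw [← sum_mobiusWeight_not_reachable, sum_filter, sum_filter, ← sum_sub_distrib,
      ← sum_neg_distrib]
    refine sum_congr rfl fun E hE => ?_
    rw [hcount E hE]
    split_ifs <;> ring
  rw [← sum_filter_add_sum_filter_not _ fun E => (twoSection E).Reachable a b, hcut,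
    neg_add_cancel]

end SingleEdge

section Factorization

variable {V : Type*} [DecidableEq V] {A B E F : Finset (Finset V)} {e f : Finset V}

theorem filter_subset_mem_subforests (hE : E ∈ subforests F) :
    {e ∈ E | e ⊆ f} ∈ subforests {f} := by
  rw [mem_subforests] at hE ⊢
  refine ⟨hE.1.mono (filter_subset _ E), fun e he => ?_⟩
  obtain ⟨he, hef⟩ := mem_filter.1 he
  exact ⟨(hE.2 e he).1, f, mem_singleton_self f, hef⟩

theorem filter_not_subset_mem_subforests (hE : E ∈ subforests (insert f F)) :
    {e ∈ E | ¬ e ⊆ f} ∈ subforests F := by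
  rw [mem_subforests] at hE ⊢
  refine ⟨hE.1.mono (filter_subset _ E), fun e he => ?_⟩
  obtain ⟨he, hef⟩ := mem_filter.1 he
  obtain ⟨htwo, g, hg, heg⟩ := hE.2 e he
  exact ⟨htwo, g, mem_of_mem_insert_of_ne hg fun hgf => hef (hgf ▸ heg), heg⟩

theorem subset_of_mem_subforests_singleton (hA : A ∈ subforests {f}) (he : e ∈ A) : e ⊆ f := by
  obtain ⟨-, g, hg, heg⟩ := (mem_subforests.1 hA).2 e he
  exact mem_singleton.1 hg ▸ heg

theorem not_subset_of_mem_subforests (hF : IsBergeAcyclic (insert f F)) (hf : f ∉ F)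
    (hB : B ∈ subforests F) (he : e ∈ B) : ¬ e ⊆ f := by
  intro hef
  obtain ⟨htwo, g, hg, heg⟩ := (mem_subforests.1 hB).2 e he
  obtain rfl := hF.eq_of_subset_of_subset (mem_insert_self f F) (mem_insert_of_mem hg) htwo hef heg
  exact hf hg

theorem filter_subset_union (hF : IsBergeAcyclic (insert f F)) (hf : f ∉ F)
    (hA : A ∈ subforests {f}) (hB : B ∈ subforests F) : {e ∈ A ∪ B | e ⊆ f} = A := by
  rw [filter_union, filter_true_of_mem fun _ => subset_of_mem_subforests_singleton hA,
    filter_false_of_mem fun _ => not_subset_of_mem_subforests hF hf hB, union_empty]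

theorem filter_not_subset_union (hF : IsBergeAcyclic (insert f F)) (hf : f ∉ F)
    (hA : A ∈ subforests {f}) (hB : B ∈ subforests F) : {e ∈ A ∪ B | ¬ e ⊆ f} = B := by
  rw [filter_union, filter_false_of_mem fun _ he =>
      not_not_intro (subset_of_mem_subforests_singleton hA he),
    filter_true_of_mem fun _ => not_subset_of_mem_subforests hF hf hB, empty_union]

theorem union_mem_subforests_insert (hF : IsBergeAcyclic (insert f F)) (hf : f ∉ F)
    (hA : A ∈ subforests {f}) (hB : B ∈ subforests F) : A ∪ B ∈ subforests (insert f F) := by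
  have hfilter := filter_subset_union hF hf hA hB
  obtain ⟨hAacyclic, hAsub⟩ := mem_subforests.1 hA
  obtain ⟨hBacyclic, hBsub⟩ := mem_subforests.1 hB
  have hsub : ∀ e ∈ A ∪ B, 2 ≤ #e ∧ ∃ g ∈ insert f F, e ⊆ g := by
    intro e he
    rcases mem_union.1 he with he | he
    · exact ⟨(hAsub e he).1, f, mem_insert_self f F, subset_of_mem_subforests_singleton hA he⟩
    · obtain ⟨htwo, g, hg, heg⟩ := hBsub e he
      exact ⟨htwo, g, mem_insert_of_mem hg, heg⟩
  refine mem_subforests.2 ⟨hF.of_forall_filter_subset (fun e he => (hsub e he).2) ?_, hsub⟩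
  intro g hg
  obtain rfl | hgF := mem_insert.1 hg
  · rwa [hfilter]
  · refine hBacyclic.mono fun e he => ?_
    obtain ⟨he, heg⟩ := mem_filter.1 he
    refine (mem_union.1 he).resolve_left fun heA => hf ?_
    rwa [hF.eq_of_subset_of_subset (mem_insert_self f F) hg (hAsub e heA).1
      (subset_of_mem_subforests_singleton hA heA) heg]

theorem sum_mobiusWeight_subforests_insert (hF : IsBergeAcyclic (insert f F)) (hf : f ∉ F) :
    ∑ E ∈ subforests (insert f F), mobiusWeight E =
      (∑ A ∈ subforests {f}, mobiusWeight A) * ∑ B ∈ subforests F, mobiusWeight B := by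
  rw [sum_mul_sum, ← sum_product']
  refine sum_bij' (fun E _ => ({e ∈ E | e ⊆ f}, {e ∈ E | ¬ e ⊆ f})) (fun p _ => p.1 ∪ p.2)
    ?_ ?_ ?_ ?_ ?_
  · exact fun E hE => mem_product.2
      ⟨filter_subset_mem_subforests hE, filter_not_subset_mem_subforests hE⟩
  · rintro ⟨A, B⟩ hAB
    exact union_mem_subforests_insert hF hf (mem_product.1 hAB).1 (mem_product.1 hAB).2
  · exact fun E _ => filter_union_filter_not_eq _ E
  · rintro ⟨A, B⟩ hAB
    obtain ⟨hA, hB⟩ := mem_product.1 hAB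
    exact Prod.ext (filter_subset_union hF hf hA hB) (filter_not_subset_union hF hf hA hB)
  · exact fun E _ => (prod_filter_mul_prod_filter_not E (· ⊆ f) edgeWeight).symm

theorem sum_mobiusWeight_subforests (hF : IsBergeAcyclic F) (he : e ∈ F) (htwo : 2 ≤ #e) :
    ∑ E ∈ subforests F, mobiusWeight E = 0 := by
  rw [← insert_erase he] at hF ⊢
  rw [sum_mobiusWeight_subforests_insert hF (notMem_erase e F),
    sum_mobiusWeight_subforests_singleton htwo, zero_mul]

end Factorization

section Order

variable {V : Type*} [DecidableEq V]

theorem edges_injective : Function.Injective (edges : Hyperforest V → Finset (Finset V)) := by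
  rintro ⟨E, _, _, _⟩ ⟨E', _, _, _⟩ rfl
  rfl

theorem edges_subset_of_hfle_of_hfle {F G : Hyperforest V} (hFG : HFle F G) (hGF : HFle G F) :
    F.edges ⊆ G.edges := by
  intro e he
  obtain ⟨g, hg, heg⟩ := hFG e he
  obtain ⟨f, hf, hgf⟩ := hGF g hg
  have hef : e = f := F.isBergeAcyclic.eq_of_subset_of_subset he hf (F.two_le e he)
    Subset.rfl (heg.trans hgf)
  rwa [heg.antisymm (hef ▸ hgf)]

instance : PartialOrder (Hyperforest V) where
  le := HFle
  le_refl F e he := ⟨e, he, Subset.rfl⟩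
  le_trans F G H hFG hGH e he :=
    let ⟨g, hg, heg⟩ := hFG e he
    let ⟨h, hh, hgh⟩ := hGH g hg
    ⟨h, hh, heg.trans hgh⟩
  le_antisymm _ _ hFG hGF := edges_injective <|
    (edges_subset_of_hfle_of_hfle hFG hGF).antisymm (edges_subset_of_hfle_of_hfle hGF hFG)

instance : OrderBot (Hyperforest V) where
  bot := ofIsBergeAcyclic ∅ (fun _ he => absurd he (notMem_empty _))
    fun _ he => absurd he (notMem_empty _)
  bot_le _ _ he := absurd he (notMem_empty _)

theorem edges_eq_empty_iff {F : Hyperforest V} : F.edges = ∅ ↔ F = ⊥ :=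
  ⟨fun h => edges_injective h, fun h => h ▸ rfl⟩

theorem image_edges_Iic (F : Hyperforest V) : edges '' Set.Iic F = subforests F.edges := by
  ext E
  rw [mem_coe, mem_subforests]
  constructor
  · rintro ⟨G, hGF, rfl⟩
    exact ⟨G.isBergeAcyclic, fun e he => ⟨G.two_le e he, hGF e he⟩⟩
  · rintro ⟨hE, hsub⟩
    exact ⟨ofIsBergeAcyclic E hE fun e he => (hsub e he).1, fun e he => (hsub e he).2, rfl⟩

theorem finite_Iic (F : Hyperforest V) : (Set.Iic F).Finite :=
  Set.Finite.of_finite_image (F.image_edges_Iic ▸ finite_toSet _) edges_injective.injOn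

theorem finsum_mem_Iic_mobiusWeight_edges (F : Hyperforest V) :
    ∑ᶠ G ∈ Set.Iic F, mobiusWeight G.edges = ∑ E ∈ subforests F.edges, mobiusWeight E := by
  rw [← finsum_mem_coe_finset, ← F.image_edges_Iic, finsum_mem_image edges_injective.injOn]

theorem finsum_mem_Iic_mobiusWeight_edges_eq_zero {F : Hyperforest V} (hF : F ≠ ⊥) :
    ∑ᶠ G ∈ Set.Iic F, mobiusWeight G.edges = 0 := by
  obtain ⟨e, he⟩ := nonempty_iff_ne_empty.2 fun h => hF (edges_eq_empty_iff.1 h)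
  rw [F.finsum_mem_Iic_mobiusWeight_edges,
    sum_mobiusWeight_subforests F.isBergeAcyclic he (F.two_le e he)]

end Order

end Hyperforest

theorem stmt13_general {V : Type*} [DecidableEq V]
    (μ : Hyperforest V → ℤ)
    (hbot : ∀ F : Hyperforest V, F.edges = ∅ → μ F = 1)
    (hrec : ∀ F : Hyperforest V, F.edges ≠ ∅ →
      μ F = -∑ᶠ F' ∈ {F' : Hyperforest V | HFle F' F ∧ F' ≠ F}, μ F')
    (F : Hyperforest V) :
    μ F = ∏ᶠ j ∈ Set.Ici 2,
      (-(((j - 2).factorial : ℕ) : ℤ)) ^ (F.edges.filter fun e => e.card = j).card := by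
  have hIio (G : Hyperforest V) : {F' | HFle F' G ∧ F' ≠ G} = Set.Iio G :=
    Set.ext fun F' => (lt_iff_le_and_ne (a := F') (b := G)).symm
  have hμ : μ = fun G => Hyperforest.mobiusWeight G.edges :=
    eq_of_finsum_mem_Iic_eq_zero Hyperforest.finite_Iic (hbot ⊥ rfl)
      (fun G hG => hIio G ▸ hrec G fun h => hG (Hyperforest.edges_eq_empty_iff.1 h))
      fun _ => Hyperforest.finsum_mem_Iic_mobiusWeight_edges_eq_zero
  exact (congrFun hμ F).trans (Hyperforest.mobiusWeight_eq_finprod F.two_le)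

/-- The Möbius function of the poset of hyperforests (defined by `μ(⊥) = 1` and
`μ(F) = -∑_{F' < F} μ(F')`) is given by `μ(F) = ∏_{j ≥ 2} (-(j-2)!)^{κ_j}`,
where `κ_j` is the number of hyperedges of `F` with exactly `j` vertices. -/
theorem stmt13 {V : Type*} [DecidableEq V] [Fintype V]
    (μ : Hyperforest V → ℤ)
    (hbot : ∀ F : Hyperforest V, F.edges = ∅ → μ F = 1)
    (hrec : ∀ F : Hyperforest V, F.edges ≠ ∅ →
      μ F = -∑ᶠ F' ∈ {F' : Hyperforest V | HFle F' F ∧ F' ≠ F}, μ F')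
    (F : Hyperforest V) :
    μ F = ∏ᶠ j ∈ Set.Ici 2,
      (-(((j - 2).factorial : ℕ) : ℤ)) ^ (F.edges.filter fun e => e.card = j).card :=
  stmt13_general μ hbot hrec F
end

section
/- For n ≥ 2 and 1 ≤ k ≤ n-1, the number of hypertrees with k hyperedges on n labelled vertices equals n^{k-1} S_2(n-1,k), where S_2 denotes Stirling numbers of the second kind (Husimi's theorem). In particular, for k = n-1 this recovers Cayley's formula: there are n^{n-2} labelled trees on n vertices. -/
/-- A hyperforest is connected (i.e. is a hypertree) if any two vertices are
joined by a path of consecutively adjacent vertices. -/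
def HFConnected {V : Type*} [DecidableEq V] (F : Hyperforest V) : Prop :=
  ∀ u v : V, Relation.ReflTransGen (fun a b => a ≠ b ∧ ∃ e ∈ F.edges, a ∈ e ∧ b ∈ e) u v

/-!
Root a hypertree at a vertex `r`. By the condition on cycles, each hyperedge has a unique vertex
nearest to `r`, its parent, and each vertex other than `r` is a non-parent in exactly one
hyperedge. Removing the parents thus leaves a partition of the other `n - 1` vertices into `k`
blocks, and the hypertree is recovered from this partition and the parents. A map from blocks to
vertices arises in this way exactly when following parents never leads around a cycle.

For a fixed partition there are `n ^ (k - 1)` such maps. More generally, if the blocks leave `m`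
roots and `N(m, k)` is the number of maps, then `N(m, k) * n = m * n ^ k`: attach one block, of
size `s`, to a vertex `x` outside it and contract. This merges the block into that of `x`, or adds
it to the roots if `x` is one of the `m` roots, so the numbers of roots after contraction add up
to `(n - s) * m + m * s = m * n` over all `x`, and the claim follows by induction on `k`.
-/

section Counting

/-- The map `parent : ι → V`, attaching each class `owner ⁻¹' {some a}` of vertices to a single
vertex, creates no cycle among the classes; the vertices with `owner v = none` are the roots.
Acyclicity is encoded by a height function, which for infinite `ι` is a stronger condition. -/
def IsAcyclicParent {V ι : Type*} (owner : V → Option ι) (parent : ι → V) : Prop :=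
  ∃ depth : Option ι → ℕ, ∀ a, depth (owner (parent a)) < depth (some a)

/-- The owner map obtained from `owner` by attaching the class `none : Option κ` to the vertex
`x`: its vertices are handed over to the class of `x`. This is the contraction step of the count;
it is meaningful only if `x` is not itself in the class that is attached. -/
def contractOwner {V κ : Type*} [DecidableEq κ] (owner : V → Option (Option κ)) (x v : V) :
    Option κ :=
  if owner v = some none then (owner x).join else (owner v).join

variable {V ι κ : Type*}

theorem isAcyclicParent_map_equiv_iff {ι' : Type*} {owner : V → Option ι} {parent : ι' → V}
    (φ : ι ≃ ι') :
    IsAcyclicParent (fun v => (owner v).map φ) parent ↔ IsAcyclicParent owner (parent ∘ φ) := by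
  constructor
  · rintro ⟨depth, h⟩
    exact ⟨fun o => depth (o.map φ), fun a => by simpa using h (φ a)⟩
  · rintro ⟨depth, h⟩
    exact ⟨fun o => depth (o.map φ.symm),
      fun a => by simpa [Function.comp_def] using h (φ.symm a)⟩

theorem isAcyclicParent_option_iff [DecidableEq κ] {owner : V → Option (Option κ)}
    {parent : Option κ → V} :
    IsAcyclicParent owner parent ↔ owner (parent none) ≠ some none ∧
      IsAcyclicParent (contractOwner owner (parent none)) (parent ∘ some) := by
  constructor
  · rintro ⟨depth, h⟩
    have hne : owner (parent none) ≠ some none := fun h0 => (h none).ne (congrArg depth h0)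
    have map_join : ∀ o : Option (Option κ), o ≠ some none → o.join.map some = o := by
      rintro (_ | _ | _) <;> simp
    refine ⟨hne, fun o => depth (o.map some), fun a => ?_⟩
    by_cases ha : owner (parent (some a)) = some none
    · simpa [contractOwner, ha, map_join _ hne] using (h none).trans (ha ▸ h (some a))
    · simpa [contractOwner, ha, map_join _ ha] using h (some a)
  · rintro ⟨hne, depth, h⟩
    -- Doubling the depths leaves room to put the reattached class just above its parent.
    let depth' (o : Option (Option κ)) : ℕ :=
      if o = some none then 2 * depth (owner (parent none)).join + 1 else 2 * depth o.join
    refine ⟨depth', ?_⟩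
    rintro (_ | a)
    · simp [depth', hne]
    · have ha := h a
      by_cases h0 : owner (parent (some a)) = some none <;>
        simp [contractOwner, depth', h0] at ha ⊢ <;> omega

/-- An acyclic parent map on `Option κ` is the choice of a parent `x` for `none`, followed by an
acyclic parent map on `κ` for the contracted owner map. -/
def acyclicParentOptionEquiv [DecidableEq κ] (owner : V → Option (Option κ)) :
    {parent : Option κ → V // IsAcyclicParent owner parent} ≃
      Σ x : {x // owner x ≠ some none},
        {parent : κ → V // IsAcyclicParent (contractOwner owner x) parent} where
  toFun p := ⟨⟨p.1 none, (isAcyclicParent_option_iff.1 p.2).1⟩,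
    ⟨p.1 ∘ some, (isAcyclicParent_option_iff.1 p.2).2⟩⟩
  invFun z := ⟨fun o => o.elim z.1.1 z.2.1, isAcyclicParent_option_iff.2 ⟨z.1.2, z.2.2⟩⟩
  left_inv p := Subtype.ext (funext fun o => by cases o <;> rfl)
  right_inv _ := rfl

open Finset in
theorem sum_card_contractOwner_eq_none [Fintype V] [DecidableEq κ]
    (owner : V → Option (Option κ)) :
    ∑ x with owner x ≠ some none, #{v | contractOwner owner x v = none} =
      #{v | owner v = none} * Fintype.card V := by
  classical
  set roots := #{v | owner v = none}
  set attached := #{v | owner v = some none}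
  have card_roots (x : V) (hx : owner x ≠ some none) :
      #{v | contractOwner owner x v = none} = roots + if owner x = none then attached else 0 := by
    have join_eq_none (o : Option (Option κ)) : o.join = none ↔ o = none ∨ o = some none := by
      rcases o with _ | _ | _ <;> simp
    have : ∀ v, contractOwner owner x v = none ↔
        owner v = none ∨ (owner v = some none ∧ owner x = none) := by
      intro v
      by_cases hv : owner v = some none <;> simp [contractOwner, hv, join_eq_none, hx]
    rw [filter_congr fun v _ => this v, filter_or,
      card_union_of_disjoint (disjoint_filter.2 (by simp +contextual))]
    split_ifs with h <;> simp [h, roots, attached]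
  calc ∑ x with owner x ≠ some none, #{v | contractOwner owner x v = none}
      = ∑ x with owner x ≠ some none, (roots + if owner x = none then attached else 0) :=
        sum_congr rfl fun x hx => card_roots x (by simpa using hx)
    _ = #{x | owner x ≠ some none} * roots + roots * attached := by
        rw [sum_add_distrib, sum_const, smul_eq_mul, ← sum_filter, filter_filter, sum_const,
          smul_eq_mul]
        congr 3
        ext v
        simp +contextual
    _ = roots * (#{x | owner x = some none} + #{x | owner x ≠ some none}) := by ring
    _ = roots * Fintype.card V := by rw [card_filter_add_card_filter_not, card_univ]

theorem card_isAcyclicParent_mul_card [Finite V] [Finite ι] (owner : V → Option ι) :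
    Nat.card {parent : ι → V // IsAcyclicParent owner parent} * Nat.card V =
      Nat.card {v // owner v = none} * Nat.card V ^ Nat.card ι := by
  classical
  have := Fintype.ofFinite V
  induction ι using Finite.induction_empty_option with
  | of_equiv φ ih =>
    have reindex : {parent // IsAcyclicParent (fun v => (owner v).map φ.symm) parent} ≃
        {parent // IsAcyclicParent owner parent} :=
      (φ.arrowCongr (Equiv.refl V)).subtypeEquiv fun _ => isAcyclicParent_map_equiv_iff φ.symm
    simpa [Nat.card_congr reindex, Nat.card_congr φ] using ih fun v => (owner v).map φ.symm
  | h_empty =>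
    have : Nat.card {parent : PEmpty → V // IsAcyclicParent owner parent} = 1 :=
      Nat.card_eq_one_iff_exists.2
        ⟨⟨PEmpty.elim, fun _ => 0, fun a => a.elim⟩, fun _ => Subtype.ext (Subsingleton.elim _ _)⟩
    have all_roots (v : V) : owner v = none := Subsingleton.elim _ _
    rw [this]
    simp [all_roots]
  | @h_option κ _ ih =>
    calc Nat.card {parent // IsAcyclicParent owner parent} * Nat.card V
        = ∑ x : {x // owner x ≠ some none},
            Nat.card {v // contractOwner owner x v = none} * Nat.card V ^ Nat.card κ := by
          rw [Nat.card_congr (acyclicParentOptionEquiv owner), Nat.card_sigma, Finset.sum_mul]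
          exact Finset.sum_congr rfl fun x _ => ih _
      _ = (∑ x with owner x ≠ some none,
            Finset.card {v | contractOwner owner x v = none}) * Nat.card V ^ Nat.card κ := by
          rw [Finset.sum_mul, Finset.sum_subtype (p := fun x => owner x ≠ some none)
            (F := inferInstance) _ (by simp)]
          simp only [Nat.card_eq_fintype_card, Fintype.card_subtype]
      _ = Nat.card {v // owner v = none} * Nat.card V ^ Nat.card (Option κ) := by
          rw [sum_card_contractOwner_eq_none, Finite.card_option, pow_succ',
            ← Fintype.card_subtype, ← Nat.card_eq_fintype_card, ← Nat.card_eq_fintype_card,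
            mul_assoc]

theorem card_isAcyclicParent [Finite V] [Finite ι] {owner : V → Option ι}
    (hroot : ∃! v, owner v = none) :
    Nat.card {parent : ι → V // IsAcyclicParent owner parent} =
      Nat.card V ^ (Nat.card ι - 1) := by
  have hV : 0 < Nat.card V := Finite.card_pos_iff.2 ⟨hroot.choose⟩
  have card_root : Nat.card {v // owner v = none} = 1 := by
    rw [Nat.card_eq_one_iff_unique]
    exact ⟨⟨fun v w => Subtype.ext (hroot.unique v.2 w.2)⟩, ⟨_, hroot.choose_spec.1⟩⟩
  have h := card_isAcyclicParent_mul_card owner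
  rw [card_root, one_mul] at h
  rcases hk : Nat.card ι with _ | k
  · rw [hk, pow_zero] at h
    exact Nat.eq_one_of_mul_eq_one_right h
  · rw [hk, pow_succ] at h
    exact Nat.eq_of_mul_eq_mul_right hV h

end Counting

theorem dist_lt_of_mem_support_of_length_eq_dist {V : Type*} {G : SimpleGraph V} {x r v : V}
    {w : G.Walk x r} (hw : w.length = G.dist x r) (hv : v ∈ w.support) (hvx : v ≠ x) :
    G.dist v r < G.dist x r := by
  classical
  exact (G.dist_le (w.dropUntil v hv)).trans_lt
    (hw ▸ SimpleGraph.Walk.length_dropUntil_lt_length hv hvx)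

theorem exists_adj_dist_lt {V : Type*} {G : SimpleGraph V} (hG : G.Preconnected) {v r : V}
    (hv : v ≠ r) : ∃ u, G.Adj v u ∧ G.dist u r < G.dist v r := by
  obtain ⟨w, hw⟩ := (hG v r).exists_walk_length_eq_dist
  cases w with
  | nil => exact absurd rfl hv
  | cons hadj w' =>
    exact ⟨_, hadj, dist_lt_of_mem_support_of_length_eq_dist hw (by simp) hadj.ne'⟩

namespace Hyperforest

variable {V : Type*} [DecidableEq V]

/-- The graph in which two vertices are adjacent when they lie in a common hyperedge. It turns
connectedness of a hyperforest into connectedness of a simple graph. -/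
def primalGraph (T : Hyperforest V) : SimpleGraph V where
  Adj a b := a ≠ b ∧ ∃ e ∈ T.edges, a ∈ e ∧ b ∈ e
  symm := ⟨fun _ _ ⟨hne, e, he, ha, hb⟩ => ⟨hne.symm, e, he, hb, ha⟩⟩
  loopless := ⟨fun _ h => h.1 rfl⟩

theorem hfConnected_iff_preconnected (T : Hyperforest V) :
    HFConnected T ↔ T.primalGraph.Preconnected :=
  forall₂_congr fun u v => (SimpleGraph.reachable_iff_reflTransGen (G := T.primalGraph) u v).symm

theorem ext_edges {T T' : Hyperforest V} (h : T.edges = T'.edges) : T = T' := by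
  cases T
  cases T'
  congr

theorem eq_of_mem_of_mem {T : Hyperforest V} {e f : Finset V} (he : e ∈ T.edges)
    (hf : f ∈ T.edges) {x y : V} (hxy : x ≠ y) (hxe : x ∈ e) (hxf : x ∈ f) (hye : y ∈ e)
    (hyf : y ∈ f) : e = f := by
  by_contra hne
  exact hxy (Finset.card_le_one.1 (T.inter e he f hf hne) x (by simp [hxe, hxf]) y
    (by simp [hye, hyf]))

theorem exists_edge_of_isCycle (T : Hyperforest V) {u : V} {c : T.primalGraph.Walk u u}
    (hc : c.IsCycle) : ∃ e ∈ T.edges, ∀ x ∈ c.support, x ∈ e := by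
  obtain ⟨k, hk⟩ : ∃ k, c.length = k + 3 := ⟨c.length - 3, by have := hc.three_le_length; omega⟩
  have getVert_add_one (j : Fin (k + 3)) : c.getVert (j + 1 : Fin (k + 3)) = c.getVert (j + 1) := by
    rw [Fin.val_add_one]
    split_ifs with hj
    · simp [hj, ← hk]
    · rfl
  obtain ⟨e, he, hmem⟩ := T.cycles k (fun j => c.getVert j)
    (fun i j hij => Fin.ext (hc.getVert_injOn' (by simp; omega) (by simp; omega) hij))
    (fun j => by
      simpa only [getVert_add_one] using (c.adj_getVert_succ (i := j) (by omega)).2)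
  refine ⟨e, he, fun x hx => ?_⟩
  obtain ⟨n, rfl, hn⟩ := SimpleGraph.Walk.mem_support_iff_exists_getVert.1 hx
  rcases hn.eq_or_lt with rfl | hlt
  · simpa using hmem 0
  · exact hmem ⟨n, hk ▸ hlt⟩

theorem mem_of_adj_of_walk_avoiding {T : Hyperforest V} {f : Finset V} (hf : f ∈ T.edges)
    {v x y : V} (hvf : v ∈ f) (hyf : y ∈ f) (hadj : T.primalGraph.Adj v x)
    (w : T.primalGraph.Walk x y) (hvw : v ∉ w.support) : x ∈ f := by
  rcases eq_or_ne x y with rfl | hxy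
  · exact hyf
  have hvy : v ≠ y := fun h => hvw (h ▸ w.end_mem_support)
  have hv_bypass : v ∉ w.bypass.support := fun h => hvw (w.support_bypass_subset_support h)
  have hcycle : (SimpleGraph.Walk.cons (show T.primalGraph.Adj y v from ⟨hvy.symm, f, hf, hyf, hvf⟩)
      (.cons hadj w.bypass)).IsCycle := by
    rw [SimpleGraph.Walk.cons_isCycle_iff, SimpleGraph.Walk.cons_isPath_iff,
      SimpleGraph.Walk.edges_cons, List.mem_cons, not_or]
    refine ⟨⟨w.bypass_isPath, hv_bypass⟩, ?_, fun h => hv_bypass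
      (w.bypass.snd_mem_support_of_mem_edges h)⟩
    simp [hxy.symm, hvy.symm]
  obtain ⟨g, hg, hmem⟩ := T.exists_edge_of_isCycle hcycle
  have hfg : f = g := eq_of_mem_of_mem hf hg hvy hvf (hmem v (by simp)) hyf (hmem y (by simp))
  exact hfg ▸ hmem x (by simp)

variable {T : Hyperforest V}

theorem mem_of_adj_of_dist_lt (hT : T.primalGraph.Preconnected) {r v x y : V} {f : Finset V}
    (hf : f ∈ T.edges) (hvf : v ∈ f) (hyf : y ∈ f) (hyv : y ≠ v) (hadj : T.primalGraph.Adj v x)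
    (hx : T.primalGraph.dist x r < T.primalGraph.dist v r)
    (hy : T.primalGraph.dist y r ≤ T.primalGraph.dist v r) : x ∈ f := by
  obtain ⟨wx, hwx⟩ := (hT x r).exists_walk_length_eq_dist
  obtain ⟨wy, hwy⟩ := (hT y r).exists_walk_length_eq_dist
  refine mem_of_adj_of_walk_avoiding hf hvf hyf hadj (wx.append wy.reverse) fun hv => ?_
  rw [SimpleGraph.Walk.mem_support_append_iff, SimpleGraph.Walk.support_reverse,
    List.mem_reverse] at hv
  rcases hv with hv | hv
  · exact (dist_lt_of_mem_support_of_length_eq_dist hwx hv hadj.ne).asymm hx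
  · exact (dist_lt_of_mem_support_of_length_eq_dist hwy hv hyv.symm).not_ge hy

theorem dist_lt_of_forall_dist_le (hT : T.primalGraph.Preconnected) {r v x : V} {e : Finset V}
    (he : e ∈ T.edges) (hxe : x ∈ e) (hve : v ∈ e) (hvx : v ≠ x)
    (hmin : ∀ z ∈ e, T.primalGraph.dist x r ≤ T.primalGraph.dist z r) :
    T.primalGraph.dist x r < T.primalGraph.dist v r := by
  by_contra! hle
  by_cases hvr : v = r
  · have hxr : T.primalGraph.dist x r = 0 := by simpa [hvr] using hmin v hve
    exact hvx (hvr.trans ((hT x r).dist_eq_zero_iff.1 hxr).symm)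
  · obtain ⟨u, hadj, hu⟩ := exists_adj_dist_lt hT hvr
    have hue : u ∈ e := mem_of_adj_of_dist_lt hT he hve hxe hvx.symm hadj hu (hmin v hve)
    exact (hu.trans_le hle).not_ge (hmin u hue)

theorem eq_of_mem_of_dist_lt (hT : T.primalGraph.Preconnected) {r v x y : V} {e f : Finset V}
    (he : e ∈ T.edges) (hf : f ∈ T.edges) (hve : v ∈ e) (hvf : v ∈ f) (hxe : x ∈ e) (hyf : y ∈ f)
    (hx : T.primalGraph.dist x r < T.primalGraph.dist v r)
    (hy : T.primalGraph.dist y r < T.primalGraph.dist v r) : e = f := by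
  have hvx : v ≠ x := by rintro rfl; exact hx.false
  have hyv : y ≠ v := by rintro rfl; exact hy.false
  have hxf : x ∈ f := mem_of_adj_of_dist_lt hT hf hvf hyf hyv ⟨hvx, e, he, hve, hxe⟩ hx hy.le
  exact eq_of_mem_of_mem he hf hvx hve hvf hxe hxf

end Hyperforest

/-- The hyperedge that the class `a` forms together with the vertex it is attached to. -/
def hyperedge {V ι : Type*} [Fintype V] [DecidableEq V] [DecidableEq ι] (owner : V → Option ι)
    (parent : ι → V) (a : ι) : Finset V :=
  insert (parent a) (Finset.univ.filter fun v => owner v = some a)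

theorem mem_hyperedge {V ι : Type*} [Fintype V] [DecidableEq V] [DecidableEq ι]
    {owner : V → Option ι} {parent : ι → V} {a : ι} {v : V} :
    v ∈ hyperedge owner parent a ↔ v = parent a ∨ owner v = some a := by
  simp [hyperedge]

theorem hyperedge_map_equiv {V ι ι' : Type*} [Fintype V] [DecidableEq V] [DecidableEq ι]
    [DecidableEq ι'] {owner : V → Option ι} {parent : ι' → V} (φ : ι ≃ ι') (a : ι) :
    hyperedge (fun v => (owner v).map φ) parent (φ a) = hyperedge owner (parent ∘ φ) a := by
  ext v
  simp [mem_hyperedge]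

namespace Hyperforest

variable {V : Type*} [DecidableEq V] {T : Hyperforest V}

theorem exists_nearest (hT : T.primalGraph.Preconnected) (r : V) :
    ∃ parent : T.edges → V, (∀ e, parent e ∈ e.1) ∧ ∀ e, ∀ v ∈ e.1, v ≠ parent e →
      T.primalGraph.dist (parent e) r < T.primalGraph.dist v r := by
  have exists_min (e : T.edges) :
      ∃ x ∈ e.1, ∀ z ∈ e.1, T.primalGraph.dist x r ≤ T.primalGraph.dist z r :=
    e.1.exists_min_image _ (Finset.card_pos.1 (two_pos.trans_le (T.two_le e e.2)))
  choose parent parent_mem parent_min using exists_min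
  exact ⟨parent, parent_mem, fun e v hv hne =>
    dist_lt_of_forall_dist_le hT e.2 (parent_mem e) hv hne (parent_min e)⟩

theorem exists_owner (hT : T.primalGraph.Preconnected) {r : V} {parent : T.edges → V}
    (parent_mem : ∀ e, parent e ∈ e.1)
    (dist_parent_lt : ∀ e, ∀ v ∈ e.1, v ≠ parent e →
      T.primalGraph.dist (parent e) r < T.primalGraph.dist v r) :
    ∃ owner : V → Option T.edges, ∀ v e, owner v = some e ↔ v ∈ e.1 ∧ v ≠ parent e := by
  have exists_option (v : V) : ∃ o, ∀ e : T.edges, o = some e ↔ v ∈ e.1 ∧ v ≠ parent e := by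
    by_cases h : ∃ e : T.edges, v ∈ e.1 ∧ v ≠ parent e
    · obtain ⟨e, hve, hne⟩ := h
      refine ⟨some e, fun f => ⟨?_, fun ⟨hvf, hnf⟩ => congrArg some (Subtype.ext ?_)⟩⟩
      · rintro ⟨⟩
        exact ⟨hve, hne⟩
      · exact eq_of_mem_of_dist_lt hT e.2 f.2 hve hvf (parent_mem e) (parent_mem f)
          (dist_parent_lt e v hve hne) (dist_parent_lt f v hvf hnf)
    · exact ⟨none, fun e => ⟨nofun, fun he => (h ⟨e, he⟩).elim⟩⟩
  exact ⟨fun v => (exists_option v).choose, fun v => (exists_option v).choose_spec⟩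

theorem exists_rooting [Fintype V] (hT : T.primalGraph.Preconnected) (r : V) :
    ∃ (owner : V → Option T.edges) (parent : T.edges → V), IsAcyclicParent owner parent ∧
      (∀ v, owner v = none ↔ v = r) ∧ (∀ e, ∃ v, owner v = some e) ∧
      ∀ e, hyperedge owner parent e = e.1 := by
  obtain ⟨parent, parent_mem, dist_parent_lt⟩ := exists_nearest hT r
  obtain ⟨owner, owner_eq_some⟩ := exists_owner hT parent_mem dist_parent_lt
  refine ⟨owner, parent,
    ⟨fun o => o.elim 0 fun e => T.primalGraph.dist (parent e) r + 1, fun e => ?_⟩,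
    fun v => ⟨fun hv => ?_, ?_⟩, fun e => ?_, fun e => ?_⟩
  · rcases h : owner (parent e) with _ | f
    · simp
    · have ⟨hf, hne⟩ := (owner_eq_some _ f).1 h
      simpa using dist_parent_lt f _ hf hne
  · by_contra hvr
    obtain ⟨u, ⟨hne, e, he, hve, hue⟩, hlt⟩ := exists_adj_dist_lt hT hvr
    have hv_parent : v = parent ⟨e, he⟩ := by
      by_contra hvp
      simpa [hv] using (owner_eq_some v ⟨e, he⟩).2 ⟨hve, hvp⟩
    exact (dist_parent_lt ⟨e, he⟩ u hue (hv_parent ▸ hne.symm)).not_gt (hv_parent ▸ hlt)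
  · rintro rfl
    refine Option.eq_none_iff_forall_ne_some.2 fun e h => ?_
    have ⟨hve, hne⟩ := (owner_eq_some v e).1 h
    simpa using dist_parent_lt e v hve hne
  · obtain ⟨v, hve, hne⟩ := e.1.exists_mem_ne (T.two_le e e.2) (parent e)
    exact ⟨v, (owner_eq_some v e).2 ⟨hve, hne⟩⟩
  · ext v
    rw [mem_hyperedge, owner_eq_some]
    by_cases hv : v = parent e <;> simp [hv, parent_mem]

end Hyperforest

theorem iff_of_forall_iff_add_one {m : ℕ} {p : Fin (m + 1) → Prop} {a : Fin (m + 1)}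
    (h : ∀ j, j ≠ a → j + 1 ≠ a → (p j ↔ p (j + 1))) {i j : Fin (m + 1)} (hi : i ≠ a)
    (hj : j ≠ a) : p i ↔ p j := by
  suffices ∀ t : Fin m, p (a + t.succ) ↔ p (a + 1) by
    have iff_next (i : Fin (m + 1)) (hi : i ≠ a) : p i ↔ p (a + 1) := by
      obtain ⟨t, ht⟩ := Fin.exists_succ_eq_of_ne_zero (sub_ne_zero.2 hi)
      simpa [ht] using this t
    rw [iff_next i hi, iff_next j hj]
  intro t
  cases m with
  | zero => exact t.elim0
  | succ m =>
    induction t using Fin.induction with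
    | zero => rfl
    | succ t ih =>
      have succ_succ : t.succ.succ = t.castSucc.succ + 1 := by
        rw [Fin.succ_castSucc, Fin.coeSucc_eq_succ]
      rw [← ih, succ_succ, ← add_assoc]
      refine (h _ (by simp) ?_).symm
      simp [add_assoc, ← succ_succ]

namespace IsAcyclicParent

variable {V ι : Type*} {owner : V → Option ι} {parent : ι → V}

theorem owner_parent_ne (h : IsAcyclicParent owner parent) (a : ι) :
    owner (parent a) ≠ some a := by
  obtain ⟨depth, hdepth⟩ := h
  exact fun ha => (hdepth a).ne (congrArg depth ha)

variable [Fintype V] [DecidableEq V] [DecidableEq ι]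

theorem owner_eq_some_iff (h : IsAcyclicParent owner parent) {v : V} {a : ι} :
    owner v = some a ↔ v ∈ hyperedge owner parent a ∧ v ≠ parent a := by
  rw [mem_hyperedge]
  have := h.owner_parent_ne a
  grind

theorem eq_of_mem_hyperedge (h : IsAcyclicParent owner parent) {x y : V} {a b : ι} (hxy : x ≠ y)
    (hxa : x ∈ hyperedge owner parent a) (hya : y ∈ hyperedge owner parent a)
    (hxb : x ∈ hyperedge owner parent b) (hyb : y ∈ hyperedge owner parent b) : a = b := by
  rw [mem_hyperedge] at hxa hya hxb hyb
  obtain ⟨depth, hdepth⟩ := h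
  have ha := hdepth a
  have hb := hdepth b
  grind

theorem hyperedge_injective (h : IsAcyclicParent owner parent)
    (hsurj : ∀ a, ∃ v, owner v = some a) : Function.Injective (hyperedge owner parent) := by
  intro a b hab
  obtain ⟨v, hv⟩ := hsurj a
  obtain ⟨hva, hne⟩ := h.owner_eq_some_iff.1 hv
  have hpa : parent a ∈ hyperedge owner parent a := mem_hyperedge.2 (.inl rfl)
  exact h.eq_of_mem_hyperedge hne hva hpa (hab ▸ hva) (hab ▸ hpa)

theorem exists_owner_eq_some_of_depth_le {depth : Option ι → ℕ}
    (hdepth : ∀ a, depth (owner (parent a)) < depth (some a)) {x y : V} {a : ι} (hxy : x ≠ y)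
    (hx : x ∈ hyperedge owner parent a) (hy : y ∈ hyperedge owner parent a)
    (hle : depth (owner y) ≤ depth (owner x)) : ∃ b, owner x = some b := by
  have := hdepth a
  rw [mem_hyperedge] at hx hy
  grind

theorem mem_hyperedge_of_depth_le {depth : Option ι → ℕ}
    (hdepth : ∀ a, depth (owner (parent a)) < depth (some a)) {x y : V} {a b : ι}
    (hx : x ∈ hyperedge owner parent a) (hy : y ∈ hyperedge owner parent a)
    (hxb : owner x = some b) (hle : depth (owner y) ≤ depth (some b)) :
    y ∈ hyperedge owner parent b := by
  have := hdepth a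
  rw [mem_hyperedge] at hx hy ⊢
  grind

theorem exists_forall_mem_hyperedge (h : IsAcyclicParent owner parent) {m : ℕ}
    {c : Fin (m + 2) → V} (hc : Function.Injective c)
    (hadj : ∀ j, ∃ a, c j ∈ hyperedge owner parent a ∧ c (j + 1) ∈ hyperedge owner parent a) :
    ∃ b, ∀ j, c j ∈ hyperedge owner parent b := by
  obtain ⟨depth, hdepth⟩ := id h
  -- The class of a deepest vertex of the cycle can be left only through its parent, which the
  -- cycle visits at most once.
  obtain ⟨i, hi⟩ := Finite.exists_max fun j => depth (owner (c j))
  have ne_add_one (j : Fin (m + 2)) : c j ≠ c (j + 1) := fun hj => by simpa using hc hj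
  obtain ⟨b, hb⟩ : ∃ b, owner (c i) = some b := by
    obtain ⟨a, hia, hia'⟩ := hadj i
    exact exists_owner_eq_some_of_depth_le hdepth (ne_add_one i) hia hia' (hi _)
  have mem_of_owner {j l : Fin (m + 2)} (hj : owner (c j) = some b)
      (hjl : ∃ a, c j ∈ hyperedge owner parent a ∧ c l ∈ hyperedge owner parent a) :
      c l ∈ hyperedge owner parent b := by
    obtain ⟨a, hja, hla⟩ := hjl
    exact mem_hyperedge_of_depth_le hdepth hja hla hj (hb ▸ hi l)
  obtain ⟨a, hai, ha, ne_parent⟩ : ∃ a, i ≠ a ∧ c a ∈ hyperedge owner parent b ∧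
      ∀ j, j ≠ a → c j ≠ parent b := by
    by_cases hp : ∃ a, c a = parent b
    · obtain ⟨a, ha⟩ := hp
      refine ⟨a, ?_, mem_hyperedge.2 (.inl ha), fun j hj hjb => hj (hc (hjb.trans ha.symm))⟩
      rintro rfl
      exact h.owner_parent_ne b (ha ▸ hb)
    · exact ⟨i + 1, fun hi => ne_add_one i (congrArg c hi), mem_of_owner hb (hadj i),
        fun j _ hj => hp ⟨j, hj⟩⟩
  have mem_iff (j : Fin (m + 2)) (hj : j ≠ a) (hj' : j + 1 ≠ a) :
      c j ∈ hyperedge owner parent b ↔ c (j + 1) ∈ hyperedge owner parent b :=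
    ⟨fun hjb => mem_of_owner (h.owner_eq_some_iff.2 ⟨hjb, ne_parent j hj⟩) (hadj j),
      fun hjb => mem_of_owner (h.owner_eq_some_iff.2 ⟨hjb, ne_parent _ hj'⟩)
        ((hadj j).imp fun _ => And.symm)⟩
  refine ⟨b, fun j => ?_⟩
  rcases eq_or_ne j a with rfl | hj
  · exact ha
  · exact (iff_of_forall_iff_add_one mem_iff hai hj).1 (mem_hyperedge.2 (.inr hb))

/-- The hyperforest whose hyperedges are the classes of `owner`, each enlarged by its parent. -/
def toHyperforest [Fintype ι] (h : IsAcyclicParent owner parent)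
    (hsurj : ∀ a, ∃ v, owner v = some a) : Hyperforest V where
  edges := Finset.univ.image (hyperedge owner parent)
  two_le := by
    simp only [Finset.forall_mem_image, Finset.mem_univ, forall_const]
    intro a
    obtain ⟨v, hv⟩ := hsurj a
    obtain ⟨hva, hne⟩ := h.owner_eq_some_iff.1 hv
    exact Finset.one_lt_card.2 ⟨v, hva, parent a, mem_hyperedge.2 (.inl rfl), hne⟩
  inter := by
    simp only [Finset.forall_mem_image, Finset.mem_univ, forall_const]
    intro a b hab
    refine Finset.card_le_one.2 fun x hx y hy => ?_
    by_contra hxy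
    rw [Finset.mem_inter] at hx hy
    exact hab (congrArg _ (h.eq_of_mem_hyperedge hxy hx.1 hy.1 hx.2 hy.2))
  cycles m c hc hadj := by
    simp only [Finset.exists_mem_image, Finset.mem_univ, true_and] at hadj ⊢
    exact h.exists_forall_mem_hyperedge hc hadj

theorem card_edges_toHyperforest [Fintype ι] (h : IsAcyclicParent owner parent)
    (hsurj : ∀ a, ∃ v, owner v = some a) :
    (h.toHyperforest hsurj).edges.card = Fintype.card ι :=
  Finset.card_image_of_injective _ (h.hyperedge_injective hsurj)

theorem preconnected_toHyperforest [Fintype ι] (h : IsAcyclicParent owner parent)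
    (hsurj : ∀ a, ∃ v, owner v = some a) (hroot : ∃! v, owner v = none) :
    (h.toHyperforest hsurj).primalGraph.Preconnected := by
  obtain ⟨r, -, hr⟩ := hroot
  obtain ⟨depth, hdepth⟩ := id h
  have reachable_root (v : V) : (h.toHyperforest hsurj).primalGraph.Reachable v r := by
    induction hn : depth (owner v) using Nat.strong_induction_on generalizing v with
    | h n ih =>
      rcases hv : owner v with _ | a
      · rw [hr v hv]
      · obtain ⟨hva, hne⟩ := h.owner_eq_some_iff.1 hv
        have hadj : (h.toHyperforest hsurj).primalGraph.Adj v (parent a) :=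
          ⟨hne, _, Finset.mem_image_of_mem _ (Finset.mem_univ a), hva, mem_hyperedge.2 (.inl rfl)⟩
        exact hadj.reachable.trans (ih _ (hn ▸ hv ▸ hdepth a) _ rfl)
  exact fun u v => (reachable_root u).trans (reachable_root v).symm

theorem parent_eq_of_hyperedge_eq {ι' : Type*} [DecidableEq ι'] {owner' : V → Option ι'}
    {parent' : ι' → V} (h : IsAcyclicParent owner parent) (hsurj : ∀ a, ∃ v, owner v = some a)
    (hroot : ∀ v, owner v = none → owner' v = none) {f : ι → ι'}
    (hf : ∀ a, hyperedge owner parent a = hyperedge owner' parent' (f a)) (a : ι) :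
    parent a = parent' (f a) := by
  obtain ⟨depth, hdepth⟩ := id h
  induction hn : depth (some a) using Nat.strong_induction_on generalizing a with
  | h n ih =>
    by_contra hne
    have owner'_parent : owner' (parent a) = some (f a) :=
      (mem_hyperedge.1 (hf a ▸ mem_hyperedge.2 (.inl rfl))).resolve_left hne
    rcases hg : owner (parent a) with _ | g
    · simp [hroot _ hg] at owner'_parent
    have hlt : depth (some g) < depth (some a) := hg ▸ hdepth a
    obtain ⟨hmem, hne_g⟩ := h.owner_eq_some_iff.1 hg
    have owner'_eq : owner' (parent a) = some (f g) :=
      (mem_hyperedge.1 (hf g ▸ hmem)).resolve_left (ih _ (hn ▸ hlt) g rfl ▸ hne_g)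
    have hfg : f g = f a := Option.some_injective _ (owner'_eq.symm.trans owner'_parent)
    have hga : g = a := h.hyperedge_injective hsurj (by rw [hf, hf, hfg])
    exact hlt.ne (by rw [hga])

end IsAcyclicParent

section Partitions

variable {V α : Type*} [Fintype α] [DecidableEq α]

theorem exists_finpartition_equiv {ι : Type*} {f : α → ι} (hf : Function.Surjective f) :
    ∃ (P : Finpartition (Finset.univ : Finset α)) (φ : P.parts ≃ ι),
      ∀ x, φ ⟨P.part x, P.part_mem.2 (Finset.mem_univ x)⟩ = f x := by
  classical
  let P := Finpartition.ofSetoid (Setoid.ker f)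
  let toPart (x : α) : P.parts := ⟨P.part x, P.part_mem.2 (Finset.mem_univ x)⟩
  have toPart_eq_iff (x y : α) : toPart x = toPart y ↔ f x = f y := by
    rw [Subtype.mk_eq_mk, ← P.mem_part_iff_part_eq_part (Finset.mem_univ x) (Finset.mem_univ y),
      Finpartition.mem_part_ofSetoid_iff_rel]
    exact eq_comm
  have toPart_surjInv (x : α) : toPart (Function.surjInv hf (f x)) = toPart x :=
    (toPart_eq_iff _ _).2 (Function.surjInv_eq hf _)
  have bijective : Function.Bijective (toPart ∘ Function.surjInv hf) := by
    refine ⟨fun a b hab => ?_, fun t => ?_⟩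
    · simpa only [Function.surjInv_eq] using (toPart_eq_iff _ _).1 hab
    · obtain ⟨x, -, hx⟩ := P.part_surjOn t.2
      exact ⟨f x, (toPart_surjInv x).trans (Subtype.ext hx)⟩
  exact ⟨P, (Equiv.ofBijective _ bijective).symm,
    fun x => (Equiv.symm_apply_eq _).2 (toPart_surjInv x).symm⟩

/-- The owner map of a partition of `α`, where `e` identifies the vertices with `α` and a root. -/
def partOwner (e : V ≃ Option α) (P : Finpartition (Finset.univ : Finset α)) (v : V) :
    Option P.parts :=
  (e v).map fun x => ⟨P.part x, P.part_mem.2 (Finset.mem_univ x)⟩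

variable {e : V ≃ Option α} {P : Finpartition (Finset.univ : Finset α)}

theorem partOwner_eq_none_iff {v : V} : partOwner e P v = none ↔ v = e.symm none := by
  simp [partOwner, e.eq_symm_apply]

theorem existsUnique_partOwner_eq_none : ∃! v, partOwner e P v = none :=
  ⟨e.symm none, partOwner_eq_none_iff.2 rfl, fun _ => partOwner_eq_none_iff.1⟩

theorem partOwner_symm_some_eq_iff {x : α} {b : P.parts} :
    partOwner e P (e.symm (some x)) = some b ↔ x ∈ b.1 := by
  rw [partOwner, e.apply_symm_apply, Option.map_some, Option.some_inj, Subtype.ext_iff]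
  exact P.part_eq_iff_mem b.2

theorem exists_partOwner_eq_some (b : P.parts) : ∃ v, partOwner e P v = some b := by
  obtain ⟨x, hx⟩ := P.nonempty_of_mem_parts b.2
  exact ⟨e.symm (some x), partOwner_symm_some_eq_iff.2 hx⟩

theorem exists_map_partOwner_eq {ι : Type*} {owner : V → Option ι}
    (hroot : ∀ v, owner v = none ↔ v = e.symm none) (hsurj : ∀ a, ∃ v, owner v = some a) :
    ∃ (P : Finpartition (Finset.univ : Finset α)) (φ : P.parts ≃ ι),
      ∀ v, (partOwner e P v).map φ = owner v := by
  have exists_owner (x : α) : ∃ a, owner (e.symm (some x)) = some a :=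
    Option.ne_none_iff_exists'.1 ((hroot _).not.2 (by simp))
  choose f hf using exists_owner
  have f_surjective : Function.Surjective f := fun a => by
    obtain ⟨v, hv⟩ := hsurj a
    obtain ⟨o, rfl⟩ := e.symm.surjective v
    rcases o with _ | x
    · simp [(hroot _).2 rfl] at hv
    · exact ⟨x, Option.some_injective _ ((hf x).symm.trans hv)⟩
  obtain ⟨P, φ, hφ⟩ := exists_finpartition_equiv f_surjective
  refine ⟨P, φ, fun v => ?_⟩
  obtain ⟨_ | x, rfl⟩ := e.symm.surjective v
  · simp [partOwner, (hroot _).2 rfl]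
  · simp [partOwner, hφ, hf]

variable [Fintype V] [DecidableEq V]

theorem exists_eq_part_of_hyperedge_eq {Q : Finpartition (Finset.univ : Finset α)}
    {parent : P.parts → V} {parent' : Q.parts → V} (h : IsAcyclicParent (partOwner e P) parent)
    (h' : IsAcyclicParent (partOwner e Q) parent')
    (hPQ : ∀ a, ∃ b, hyperedge (partOwner e P) parent a = hyperedge (partOwner e Q) parent' b)
    (a : P.parts) : ∃ b : Q.parts, a.1 = b.1 ∧ parent a = parent' b := by
  choose f hf using hPQ
  have parent_eq : parent a = parent' (f a) :=
    h.parent_eq_of_hyperedge_eq exists_partOwner_eq_some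
      (fun v hv => partOwner_eq_none_iff.2 (partOwner_eq_none_iff.1 hv)) hf a
  refine ⟨f a, Finset.ext fun x => ?_, parent_eq⟩
  rw [← partOwner_symm_some_eq_iff, h.owner_eq_some_iff, hf, parent_eq, ← h'.owner_eq_some_iff,
    partOwner_symm_some_eq_iff]

/-- The hypertree encoded by a partition `P` of the non-root vertices into `k` parts, together
with an acyclic choice of a vertex to which each part is attached. -/
def hypertreeOfPartition (e : V ≃ Option α) (k : ℕ)
    (z : Σ P : {P : Finpartition (Finset.univ : Finset α) // P.parts.card = k},
      {parent : P.1.parts → V // IsAcyclicParent (partOwner e P.1) parent}) :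
    {T : Hyperforest V // HFConnected T ∧ T.edges.card = k} :=
  ⟨z.2.2.toHyperforest exists_partOwner_eq_some,
    (Hyperforest.hfConnected_iff_preconnected _).2
      (z.2.2.preconnected_toHyperforest _ existsUnique_partOwner_eq_none),
    by rw [IsAcyclicParent.card_edges_toHyperforest, Fintype.card_coe, z.1.2]⟩

theorem hypertreeOfPartition_injective (e : V ≃ Option α) (k : ℕ) :
    Function.Injective (hypertreeOfPartition e k) := by
  rintro ⟨⟨P, hP⟩, parent, h⟩ ⟨⟨Q, hQ⟩, parent', h'⟩ heq
  have edges_eq : Finset.univ.image (hyperedge (partOwner e P) parent) =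
      Finset.univ.image (hyperedge (partOwner e Q) parent') :=
    congrArg (fun T => T.1.edges) heq
  have exists_eq_part := exists_eq_part_of_hyperedge_eq h h' fun a => by
    simpa [eq_comm] using edges_eq.subset (Finset.mem_image_of_mem _ (Finset.mem_univ a))
  have exists_eq_part' := exists_eq_part_of_hyperedge_eq h' h fun a => by
    simpa [eq_comm] using edges_eq.superset (Finset.mem_image_of_mem _ (Finset.mem_univ a))
  obtain rfl : P = Q := by
    refine Finpartition.ext (Finset.Subset.antisymm (fun s hs => ?_) fun s hs => ?_)
    · obtain ⟨b, hb : s = b.1, -⟩ := exists_eq_part ⟨s, hs⟩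
      exact hb ▸ b.2
    · obtain ⟨b, hb : s = b.1, -⟩ := exists_eq_part' ⟨s, hs⟩
      exact hb ▸ b.2
  obtain rfl : parent = parent' := funext fun a => by
    obtain ⟨b, hb, hparent⟩ := exists_eq_part a
    rw [hparent, Subtype.ext hb]
  rfl

theorem hypertreeOfPartition_surjective (e : V ≃ Option α) (k : ℕ) :
    Function.Surjective (hypertreeOfPartition e k) := by
  rintro ⟨T, hT, hk⟩
  obtain ⟨owner, parent, h, hroot, hsurj, hyperedge_eq⟩ :=
    T.exists_rooting (T.hfConnected_iff_preconnected.1 hT) (e.symm none)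
  obtain ⟨P, φ, hφ⟩ := exists_map_partOwner_eq hroot hsurj
  obtain rfl : (fun v => (partOwner e P v).map φ) = owner := funext hφ
  have hcard : P.parts.card = k := by
    rw [← hk, ← Fintype.card_coe, ← Fintype.card_coe, Fintype.card_congr φ]
  refine ⟨⟨⟨P, hcard⟩, parent ∘ φ, (isAcyclicParent_map_equiv_iff φ).1 h⟩,
    Subtype.ext (Hyperforest.ext_edges ?_)⟩
  have hyperedge_comp (a : P.parts) :
      hyperedge (partOwner e P) (parent ∘ φ) a = (φ a).1 :=
    (hyperedge_map_equiv φ a).symm.trans (hyperedge_eq _)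
  ext s
  refine Finset.mem_image.trans ⟨?_, fun hs => ⟨φ.symm ⟨s, hs⟩, Finset.mem_univ _, ?_⟩⟩
  · rintro ⟨a, -, rfl⟩
    exact hyperedge_comp a ▸ (φ a).2
  · exact (hyperedge_comp _).trans (by simp)

theorem stmt16_general (e : V ≃ Option α) (k : ℕ) :
    Nat.card {T : Hyperforest V // HFConnected T ∧ T.edges.card = k} =
      Fintype.card V ^ (k - 1) *
        Nat.card {P : Finpartition (Finset.univ : Finset α) // P.parts.card = k} := by
  rw [← Nat.card_congr (Equiv.ofBijective _
    ⟨hypertreeOfPartition_injective e k, hypertreeOfPartition_surjective e k⟩), Nat.card_sigma]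
  simp only [card_isAcyclicParent existsUnique_partOwner_eq_none, Nat.card_eq_fintype_card,
    Fintype.card_coe]
  rw [Finset.sum_congr rfl fun P _ => by rw [P.2]]
  simp [mul_comm]

end Partitions

/-- Husimi's theorem: the number of hypertrees with `k` hyperedges on `n`
labelled vertices equals `n^{k-1} S_2(n-1,k)`, where the Stirling number of the
second kind `S_2(n-1,k)` is the number of partitions of an `(n-1)`-element set
into `k` nonempty blocks. -/
theorem stmt16 (n k : ℕ) (hn : 2 ≤ n) (hk1 : 1 ≤ k) (hk2 : k ≤ n - 1) :
    Nat.card {T : Hyperforest (Fin n) // HFConnected T ∧ T.edges.card = k} =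
      n ^ (k - 1) *
        Nat.card {P : Finpartition (Finset.univ : Finset (Fin (n - 1))) //
          P.parts.card = k} := by
  obtain ⟨m, rfl⟩ : ∃ m, n = m + 1 := ⟨n - 1, by omega⟩
  simpa using stmt16_general (finSuccEquiv m) k
end
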